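/- There exists a sequence {ψ_k}_{k=1}^∞ of first-order sentences of the language L, with ψ_k of quantifier depth k for each k, such that: (a) for every sequence p̄ with 0 < p(i) < 1 for all i satisfying log(∏_{i=1}^n (1 − p(i))) / log n → 0 as n → ∞, one has lim_{n→∞} Prob(n,p̄;ψ_k) = 1 for every k; and (b) for any such p̄, the function m(k) = min{ i : Prob(i,p̄;ψ_k) > 0 } grows faster than every computable function, i.e., there is no computable g : ℕ → ℕ with m(k) ≤ g(k) for all k. -/

import Mathlib

open FirstOrder Filter

namespace RandomGraph

/-- The set of potential edges of a graph on `Fin n` (pairs `(v,w)` with `v < w`).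
Vertex `v : Fin n` represents the number `v + 1` of the interval `[n] = {1, …, n}`. -/
abbrev EdgeIdx (n : ℕ) := {e : Fin n × Fin n // e.1 < e.2}

/-- An outcome of the random graph on `[n]`: a choice of which potential edges are present. -/
abbrev Sample (n : ℕ) := EdgeIdx n → Bool

/-- Adjacency of two vertices (described by their values in `Fin n`) in the outcome `ω`. -/
def adjVal {n : ℕ} (ω : Sample n) (a b : ℕ) : Prop :=
  ∃ e : EdgeIdx n, ω e = true ∧
    ((e.1.1.val = a ∧ e.1.2.val = b) ∨ (e.1.1.val = b ∧ e.1.2.val = a))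

/-- Adjacency of two vertices in the outcome `ω`. -/
def sampleAdj {n : ℕ} (ω : Sample n) (v w : Fin n) : Prop := adjVal ω v.val w.val

/-- The probability of the outcome `ω` in the model `G(n, p̄)`: each pair of distinct
vertices at distance `d` is an edge with probability `p d`, independently.  (The value `p 0` is
never used, since distinct vertices are at distance at least 1.) -/
noncomputable def sampleWeight (p : ℕ → ℝ) {n : ℕ} (ω : Sample n) : ℝ :=
  ∏ e : EdgeIdx n,
    (if ω e then p (e.1.2.val - e.1.1.val) else 1 - p (e.1.2.val - e.1.1.val))

/-- The probability of the outcome `ω` in the circular model `C(n, p̄)`: vertices `v, w` are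
adjacent with probability `p (min |v-w| (n - |v-w|))`, independently. -/
noncomputable def cWeight (p : ℕ → ℝ) {n : ℕ} (ω : Sample n) : ℝ :=
  ∏ e : EdgeIdx n,
    (if ω e then p (min (e.1.2.val - e.1.1.val) (n - (e.1.2.val - e.1.1.val)))
      else 1 - p (min (e.1.2.val - e.1.1.val) (n - (e.1.2.val - e.1.1.val))))

open scoped Classical in
/-- The probability of the event `P` in the random graph `G(n, p̄)`. -/
noncomputable def Pr (p : ℕ → ℝ) (n : ℕ) (P : Sample n → Prop) : ℝ :=
  ∑ ω : Sample n, if P ω then sampleWeight p ω else 0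

open scoped Classical in
/-- The probability of the event `P` in the circular random graph `C(n, p̄)`. -/
noncomputable def cPr (p : ℕ → ℝ) (n : ℕ) (P : Sample n → Prop) : ℝ :=
  ∑ ω : Sample n, if P ω then cWeight p ω else 0

/-! ### The language `L` of graphs (also used as the language `L^c`) -/

/-- An outcome `ω` of the random graph, viewed as a structure of `FirstOrder.Language.graph`,
the language with a single binary adjacency predicate. -/
def graphStructure {n : ℕ} (ω : Sample n) : Language.graph.Structure (Fin n) where
  RelMap | .adj => fun x => sampleAdj ω (x 0) (x 1)

/-- Satisfaction of a sentence of the language `L` in the outcome `ω`. -/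
def SatL {n : ℕ} (ω : Sample n) (ψ : Language.graph.Sentence) : Prop :=
  @Language.Sentence.Realize _ _ (graphStructure ω) ψ

/-- `Prob(n, p̄; ψ)` for a sentence `ψ` of the language `L`. -/
noncomputable def ProbL (p : ℕ → ℝ) (n : ℕ) (ψ : Language.graph.Sentence) : ℝ :=
  Pr p n fun ω => SatL ω ψ

/-- The probability that `C(n, p̄)` satisfies a sentence `ψ` of the language `L^c = L`. -/
noncomputable def cProbL (p : ℕ → ℝ) (n : ℕ) (ψ : Language.graph.Sentence) : ℝ :=
  cPr p n fun ω => SatL ω ψ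

/-! ### The language `L₊` -/

/-- The constants of the language `L₊`: the first element `1` and the last element `n`. -/
inductive plusFunc : ℕ → Type
  | one : plusFunc 0
  | last : plusFunc 0

/-- The relations of `L₊`: adjacency and successor. -/
inductive plusRel : ℕ → Type
  | adj : plusRel 2
  | succ : plusRel 2

/-- The language `L₊` with adjacency, successor (`x = y + 1`), and constants `1` and `n`. -/
def Lplus : Language := ⟨plusFunc, plusRel⟩

/-- An outcome `ω` of the random graph on `[m+1]`, as an `L₊`-structure. -/
def plusStructure {m : ℕ} (ω : Sample (m + 1)) : Lplus.Structure (Fin (m + 1)) where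
  funMap | .one => fun _ => 0 | .last => fun _ => Fin.last m
  RelMap
    | .adj => fun x => sampleAdj ω (x 0) (x 1)
    | .succ => fun x => (x 0).val = (x 1).val + 1

/-- `Prob(n, p̄; ψ)` for a sentence `ψ` of `L₊` (set to `0` in the irrelevant case `n = 0`,
where the constants cannot be interpreted). -/
noncomputable def ProbPlus (p : ℕ → ℝ) : ℕ → Lplus.Sentence → ℝ
  | 0, _ => 0
  | (m + 1), ψ => Pr p (m + 1) fun ω => @Language.Sentence.Realize _ _ (plusStructure ω) ψ

/-! ### The language `L≤` -/

/-- The relations of `L≤`: adjacency and linear order. -/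
inductive leRel : ℕ → Type
  | adj : leRel 2
  | le : leRel 2

/-- The language `L≤` with adjacency and a linear order. -/
def Lle : Language := ⟨fun _ => Empty, leRel⟩

/-- An outcome `ω` of the random graph on `[n]`, as an `L≤`-structure. -/
def leStructure {n : ℕ} (ω : Sample n) : Lle.Structure (Fin n) where
  funMap := fun f _ => Empty.elim f
  RelMap
    | .adj => fun x => sampleAdj ω (x 0) (x 1)
    | .le => fun x => x 0 ≤ x 1

/-- Satisfaction of a sentence of `L≤` in the outcome `ω`. -/
def SatLe {n : ℕ} (ω : Sample n) (ψ : Lle.Sentence) : Prop :=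
  @Language.Sentence.Realize _ _ (leStructure ω) ψ

/-- `Prob(n, p̄; ψ)` for a sentence `ψ` of `L≤`. -/
noncomputable def ProbLe (p : ℕ → ℝ) (n : ℕ) (ψ : Lle.Sentence) : ℝ :=
  Pr p n fun ω => SatLe ω ψ

/-! ### The circular languages `L₊^c` and `L≤^c` -/

/-- The relations of `L₊^c`: adjacency and cyclic successor. -/
inductive plusCRel : ℕ → Type
  | adj : plusCRel 2
  | succ : plusCRel 2

/-- The language `L₊^c`, with adjacency and cyclic successor (`x = y + 1 (mod n)`). -/
def LplusC : Language := ⟨fun _ => Empty, plusCRel⟩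

/-- An outcome `ω` of the circular random graph on `[n]`, as an `L₊^c`-structure. -/
def plusCStructure {n : ℕ} (ω : Sample n) : LplusC.Structure (Fin n) where
  funMap := fun f _ => Empty.elim f
  RelMap
    | .adj => fun x => sampleAdj ω (x 0) (x 1)
    | .succ => fun x => (x 0).val = ((x 1).val + 1) % n

/-- The probability that `C(n, p̄)` satisfies a sentence `ψ` of the language `L₊^c`. -/
noncomputable def cProbPlus (p : ℕ → ℝ) (n : ℕ) (ψ : LplusC.Sentence) : ℝ :=
  cPr p n fun ω => @Language.Sentence.Realize _ _ (plusCStructure ω) ψ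

/-- The relations of `L≤^c`: adjacency and the ternary clockwise-order predicate. -/
inductive cycRel : ℕ → Type
  | adj : cycRel 2
  | btw : cycRel 3

/-- The language `L≤^c`, with adjacency and the ternary clockwise-order predicate `C`. -/
def Lcyc : Language := ⟨fun _ => Empty, cycRel⟩

/-- `C(a, b, c)`: `a ≤ b ≤ c` holds after some cyclic permutation of `(a, b, c)`. -/
def cyclicBtw {n : ℕ} (a b c : Fin n) : Prop :=
  (a ≤ b ∧ b ≤ c) ∨ (b ≤ c ∧ c ≤ a) ∨ (c ≤ a ∧ a ≤ b)

/-- An outcome `ω` of the circular random graph on `[n]`, as an `L≤^c`-structure. -/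
def cycStructure {n : ℕ} (ω : Sample n) : Lcyc.Structure (Fin n) where
  funMap := fun f _ => Empty.elim f
  RelMap
    | .adj => fun x => sampleAdj ω (x 0) (x 1)
    | .btw => fun x => cyclicBtw (x 0) (x 1) (x 2)

/-- Satisfaction of a sentence of `L≤^c` in the outcome `ω`. -/
def SatCyc {n : ℕ} (ω : Sample n) (ψ : Lcyc.Sentence) : Prop :=
  @Language.Sentence.Realize _ _ (cycStructure ω) ψ

/-- The probability that `C(n, p̄)` satisfies a sentence `ψ` of the language `L≤^c`. -/
noncomputable def cProbCyc (p : ℕ → ℝ) (n : ℕ) (ψ : Lcyc.Sentence) : ℝ :=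
  cPr p n fun ω => SatCyc ω ψ


/-- The quantifier depth of a first-order formula. -/
def qDepth {L : Language} {α : Type} : ∀ {n : ℕ}, L.BoundedFormula α n → ℕ
  | _, .falsum => 0
  | _, .equal _ _ => 0
  | _, .rel _ _ => 0
  | _, .imp f g => max (qDepth f) (qDepth g)
  | _, .all f => qDepth f + 1

/-! ### Definability layer -/

/-- A binary relation viewed as a structure of the language of graphs. -/
def gs {V : Type} (G : V → V → Prop) : Language.graph.Structure V where
  RelMap | .adj => fun x => G (x 0) (x 1)

/-- `P` is uniformly definable, in `m` free variables, by a formula of depth at most `d`. -/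
def FO (m d : ℕ) (P : ∀ V : Type, (V → V → Prop) → (Fin m → V) → Prop) : Prop :=
  ∃ φ : Language.graph.BoundedFormula Empty m, qDepth φ ≤ d ∧
    ∀ (V : Type) (G : V → V → Prop) (xs : Fin m → V),
      @Language.BoundedFormula.Realize _ V (gs G) _ _ φ default xs ↔ P V G xs

theorem FO.adj {m d : ℕ} (i j : Fin m) : FO m d (fun _ G xs => G (xs i) (xs j)) := by
  refine ⟨.rel Language.graphRel.adj ![.var (.inr i), .var (.inr j)], by simp [qDepth], ?_⟩
  intro V G xs
  simp only [Language.BoundedFormula.Realize]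
  rfl

theorem FO.eq {m d : ℕ} (i j : Fin m) : FO m d (fun _ _ xs => xs i = xs j) := by
  refine ⟨.equal (.var (.inr i)) (.var (.inr j)), by simp [qDepth], ?_⟩
  intro V G xs
  rfl

theorem FO.imp {m d : ℕ} {P Q : ∀ V : Type, (V → V → Prop) → (Fin m → V) → Prop}
    (hP : FO m d P) (hQ : FO m d Q) : FO m d (fun V G xs => P V G xs → Q V G xs) := by
  obtain ⟨φ, h1, h2⟩ := hP
  obtain ⟨χ, h3, h4⟩ := hQ
  refine ⟨.imp φ χ, by simp [qDepth, h1, h3], ?_⟩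
  intro V G xs
  exact imp_congr (h2 V G xs) (h4 V G xs)

theorem FO.fls {m d : ℕ} : FO m d (fun _ _ _ => False) := by
  refine ⟨.falsum, by simp [qDepth], ?_⟩
  intro V G xs
  rfl

theorem FO.congr {m d : ℕ} {P Q : ∀ V : Type, (V → V → Prop) → (Fin m → V) → Prop}
    (hP : FO m d P) (h : ∀ V G xs, P V G xs ↔ Q V G xs) : FO m d Q := by
  obtain ⟨φ, h1, h2⟩ := hP
  exact ⟨φ, h1, fun V G xs => (h2 V G xs).trans (h V G xs)⟩

theorem FO.not {m d : ℕ} {P : ∀ V : Type, (V → V → Prop) → (Fin m → V) → Prop}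
    (hP : FO m d P) : FO m d (fun V G xs => ¬ P V G xs) := hP.imp FO.fls

theorem FO.and {m d : ℕ} {P Q : ∀ V : Type, (V → V → Prop) → (Fin m → V) → Prop}
    (hP : FO m d P) (hQ : FO m d Q) : FO m d (fun V G xs => P V G xs ∧ Q V G xs) :=
  (hP.imp hQ.not).not.congr (by intros; tauto)

theorem FO.or {m d : ℕ} {P Q : ∀ V : Type, (V → V → Prop) → (Fin m → V) → Prop}
    (hP : FO m d P) (hQ : FO m d Q) : FO m d (fun V G xs => P V G xs ∨ Q V G xs) :=
  (hP.not.imp hQ).congr (by intros; tauto)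

theorem FO.all {m d : ℕ} {P : ∀ V : Type, (V → V → Prop) → (Fin m → V) → V → Prop}
    (hd : 1 ≤ d)
    (h : FO (m + 1) (d - 1) (fun V G xs => P V G (fun i => xs i.castSucc) (xs (Fin.last m)))) :
    FO m d (fun V G xs => ∀ a, P V G xs a) := by
  obtain ⟨φ, h1, h2⟩ := h
  refine ⟨.all φ, by simp only [qDepth]; omega, ?_⟩
  intro V G xs
  have : (∀ a, @Language.BoundedFormula.Realize _ V (gs G) _ _ φ default (Fin.snoc xs a)) ↔
      ∀ a, P V G xs a := by
    refine forall_congr' fun a => ?_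
    rw [h2]
    simp
  exact this

theorem FO.ex {m d : ℕ} {P : ∀ V : Type, (V → V → Prop) → (Fin m → V) → V → Prop}
    (hd : 1 ≤ d)
    (h : FO (m + 1) (d - 1) (fun V G xs => P V G (fun i => xs i.castSucc) (xs (Fin.last m)))) :
    FO m d (fun V G xs => ∃ a, P V G xs a) :=
  (FO.all (P := fun V G xs a => ¬ P V G xs a) hd h.not).not.congr (by intros; simp)

/-! ### Number structures and evaluation of codes -/

open Nat.Partrec (Code)

/-- A structure with a set of numbers, an order, and a family of binary relations. -/
structure NS (V : Type) where
  num : V → Prop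
  rel : V → V → V → Prop
  lt : V → V → Prop

namespace NS
variable {V : Type} (S : NS V)

def zero (x : V) : Prop := ∀ z, S.num z → ¬ S.lt z x
def succ (x y : V) : Prop := S.lt x y ∧ ∀ z, S.num z → ¬ (S.lt x z ∧ S.lt z y)
def next (a' b' a b : V) : Prop :=
  (S.lt a' b' ∧ S.succ a' a ∧ S.lt a b' ∧ b = b') ∨
  (S.succ a' b' ∧ a = b' ∧ S.zero b) ∨
  (S.lt b' a' ∧ a = a' ∧ S.succ b' b) ∨
  (a' = b' ∧ S.zero a ∧ S.succ a' b)
def prAx (P Q : V) : Prop :=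
  ∀ c, S.num c → ∀ a, S.num a → ∀ b, S.num b → S.rel P c a → S.rel Q c b →
    (S.zero c ∧ S.zero a ∧ S.zero b) ∨
    ∃ c', S.num c' ∧ ∃ a', S.num a' ∧ ∃ b', S.num b' ∧
      S.succ c' c ∧ S.rel P c' a' ∧ S.rel Q c' b' ∧ S.next a' b' a b
def pr (c a b : V) : Prop :=
  ∃ P, ∃ Q, S.prAx P Q ∧ S.rel P c a ∧ S.rel Q c b

def ev : Code → V → V → Prop
  | .zero, _, y => S.zero y
  | .succ, x, y => S.succ x y
  | .left, x, y => ∃ b, S.num b ∧ S.pr x y b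
  | .right, x, y => ∃ a, S.num a ∧ S.pr x a y
  | .pair f g, x, y => ∃ a, S.num a ∧ ∃ b, S.num b ∧ ev f x a ∧ ev g x b ∧ S.pr y a b
  | .comp f g, x, y => ∃ z, S.num z ∧ ev g x z ∧ ev f z y
  | .prec f g, x, y => ∃ R,
      (∀ x, S.num x → ∀ y, S.num y → S.rel R x y →
        ∃ a, S.num a ∧ ∃ n, S.num n ∧ S.pr x a n ∧
          ((S.zero n ∧ ev f a y) ∨
            ∃ m, S.num m ∧ S.succ m n ∧ ∃ x', S.num x' ∧ S.pr x' a m ∧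
              ∃ i, S.num i ∧ S.rel R x' i ∧ ∃ q, S.num q ∧ S.pr q m i ∧
                ∃ r, S.num r ∧ S.pr r a q ∧ ev g r y)) ∧ S.rel R x y
  | .rfind' f, x, y => ∃ a, S.num a ∧ ∃ m, S.num m ∧ S.pr x a m ∧ ¬ S.lt y m ∧
      (∃ q, S.num q ∧ S.pr q a y ∧ ∃ z, S.num z ∧ S.zero z ∧ ev f q z) ∧
      ∀ t, S.num t → ¬ S.lt t m → S.lt t y →
        ∃ q, S.num q ∧ S.pr q a t ∧ ∃ z, S.num z ∧ ¬ S.zero z ∧ ev f q z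

/-- `x` is the number `j`. -/
def isN : ℕ → V → Prop
  | 0, x => S.zero x
  | j + 1, x => ∃ y, S.num y ∧ S.succ y x ∧ isN j y

/-- The order is a strict linear order on the numbers. -/
def lin : Prop :=
  (∀ x, S.num x → ¬ S.lt x x) ∧
  (∀ x, S.num x → ∀ y, S.num y → ∀ z, S.num z → S.lt x y → S.lt y z → S.lt x z) ∧
  (∀ x, S.num x → ∀ y, S.num y → S.lt x y ∨ x = y ∨ S.lt y x)

end NS

/-- The number structure coded by a graph with parameters. -/
def mk {V : Type} (G : V → V → Prop) (v C B L : V) : NS V where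
  num x := G v x ∧ G C x
  rel A x y := ∃ a, ∃ b, G v a ∧ G v b ∧ G v A ∧ G A a ∧ G B b ∧ G x a ∧ G a b ∧ G b y
  lt x y := ∃ a, ∃ b, G v a ∧ G v b ∧ G v L ∧ G L a ∧ G B b ∧ G x a ∧ G a b ∧ G b y

section
variable {m d : ℕ} (v C B L : Fin m)

theorem FO_num (x : Fin m) :
    FO m d (fun _ G xs => (mk G (xs v) (xs C) (xs B) (xs L)).num (xs x)) :=
  FO.and (FO.adj _ _) (FO.adj _ _)

theorem FO_rel (hd : 2 ≤ d) (A x y : Fin m) :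
    FO m d (fun _ G xs => (mk G (xs v) (xs C) (xs B) (xs L)).rel (xs A) (xs x) (xs y)) := by
  refine FO.ex (by omega) (FO.ex (by omega) ?_)
  repeat'
    first
    | exact FO.adj _ _
    | apply FO.and

theorem FO_lt (hd : 2 ≤ d) (x y : Fin m) :
    FO m d (fun _ G xs => (mk G (xs v) (xs C) (xs B) (xs L)).lt (xs x) (xs y)) :=
  FO_rel v C B L hd L x y

theorem FO_zero (hd : 3 ≤ d) (x : Fin m) :
    FO m d (fun _ G xs => (mk G (xs v) (xs C) (xs B) (xs L)).zero (xs x)) := by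
  refine FO.all (by omega) (FO.imp (FO_num _ _ _ _ _) (FO.not (FO_lt _ _ _ _ (by omega) _ _)))

theorem FO_succ (hd : 3 ≤ d) (x y : Fin m) :
    FO m d (fun _ G xs => (mk G (xs v) (xs C) (xs B) (xs L)).succ (xs x) (xs y)) := by
  refine FO.and (FO_lt _ _ _ _ (by omega) _ _) (FO.all (by omega) (FO.imp (FO_num _ _ _ _ _)
    (FO.not (FO.and (FO_lt _ _ _ _ (by omega) _ _) (FO_lt _ _ _ _ (by omega) _ _)))))

theorem FO_next (hd : 3 ≤ d) (a' b' a b : Fin m) :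
    FO m d (fun _ G xs =>
      (mk G (xs v) (xs C) (xs B) (xs L)).next (xs a') (xs b') (xs a) (xs b)) := by
  unfold NS.next
  repeat'
    first
    | exact FO_lt _ _ _ _ (by omega) _ _
    | exact FO_succ _ _ _ _ (by omega) _ _
    | exact FO_zero _ _ _ _ (by omega) _
    | exact FO.eq _ _
    | apply FO.or
    | apply FO.and

theorem FO_prAx (hd : 9 ≤ d) (P Q : Fin m) :
    FO m d (fun _ G xs =>
      (mk G (xs v) (xs C) (xs B) (xs L)).prAx (xs P) (xs Q)) := by
  unfold NS.prAx
  repeat'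
    first
    | omega
    | exact FO_num _ _ _ _ _
    | exact FO_rel _ _ _ _ (by omega) _ _ _
    | exact FO_lt _ _ _ _ (by omega) _ _
    | exact FO_succ _ _ _ _ (by omega) _ _
    | exact FO_zero _ _ _ _ (by omega) _
    | exact FO_next _ _ _ _ (by omega) _ _ _ _
    | exact FO.eq _ _
    | apply FO.or
    | apply FO.and
    | apply FO.imp
    | apply FO.ex
    | apply FO.all

theorem FO_pr (hd : 11 ≤ d) (c a b : Fin m) :
    FO m d (fun _ G xs =>
      (mk G (xs v) (xs C) (xs B) (xs L)).pr (xs c) (xs a) (xs b)) := by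
  refine FO.ex (by omega) (FO.ex (by omega) (FO.and ?_ (FO.and ?_ ?_)))
  · exact FO_prAx _ _ _ _ (by omega) _ _
  · exact FO_rel _ _ _ _ (by omega) _ _ _
  · exact FO_rel _ _ _ _ (by omega) _ _ _

theorem FO_lin (hd : 5 ≤ d) :
    FO m d (fun _ G xs => (mk G (xs v) (xs C) (xs B) (xs L)).lin) := by
  unfold NS.lin
  repeat'
    first
    | omega
    | exact FO_num _ _ _ _ _
    | exact FO_lt _ _ _ _ (by omega) _ _
    | exact FO.eq _ _
    | apply FO.or
    | apply FO.and
    | apply FO.not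
    | apply FO.imp
    | apply FO.ex
    | apply FO.all
end

theorem FO_isN (j : ℕ) : ∀ {m d : ℕ} (v C B L x : Fin m), j + 3 ≤ d →
    FO m d (fun _ G xs => (mk G (xs v) (xs C) (xs B) (xs L)).isN j (xs x)) := by
  induction j with
  | zero => intro m d v C B L x hd; exact FO_zero _ _ _ _ (by omega) _
  | succ j ih =>
    intro m d v C B L x hd
    exact FO.ex (by omega) (FO.and (FO_num _ _ _ _ _) (FO.and (FO_succ _ _ _ _ (by omega) _ _)
      (ih _ _ _ _ _ (by omega))))

theorem FO_ev (c : Code) : ∃ D : ℕ, ∀ {m d : ℕ} (v C B L x y : Fin m), D ≤ d →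
    FO m d (fun _ G xs => (mk G (xs v) (xs C) (xs B) (xs L)).ev c (xs x) (xs y)) := by
  induction c with
  | zero => exact ⟨3, fun v C B L x y hd => FO_zero _ _ _ _ hd _⟩
  | succ => exact ⟨3, fun v C B L x y hd => FO_succ _ _ _ _ hd _ _⟩
  | left => exact ⟨12, fun v C B L x y hd => FO.ex (by omega) (FO.and (FO_num _ _ _ _ _)
      (FO_pr _ _ _ _ (by omega) _ _ _))⟩
  | right => exact ⟨12, fun v C B L x y hd => FO.ex (by omega) (FO.and (FO_num _ _ _ _ _)
      (FO_pr _ _ _ _ (by omega) _ _ _))⟩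
  | pair f g hf hg =>
    obtain ⟨D₁, hf⟩ := hf
    obtain ⟨D₂, hg⟩ := hg
    refine ⟨D₁ + D₂ + 20, fun v C B L x y hd => ?_⟩
    unfold NS.ev
    repeat'
      first
      | omega
      | exact FO_num _ _ _ _ _
      | exact hf _ _ _ _ _ _ (by omega)
      | exact hg _ _ _ _ _ _ (by omega)
      | exact FO_pr _ _ _ _ (by omega) _ _ _
      | apply FO.and
      | apply FO.ex
  | comp f g hf hg =>
    obtain ⟨D₁, hf⟩ := hf
    obtain ⟨D₂, hg⟩ := hg
    refine ⟨D₁ + D₂ + 20, fun v C B L x y hd => ?_⟩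
    unfold NS.ev
    repeat'
      first
      | omega
      | exact FO_num _ _ _ _ _
      | exact hf _ _ _ _ _ _ (by omega)
      | exact hg _ _ _ _ _ _ (by omega)
      | exact FO_pr _ _ _ _ (by omega) _ _ _
      | apply FO.and
      | apply FO.ex
  | prec f g hf hg =>
    obtain ⟨D₁, hf⟩ := hf
    obtain ⟨D₂, hg⟩ := hg
    refine ⟨D₁ + D₂ + 30, fun v C B L x y hd => ?_⟩
    unfold NS.ev
    repeat'
      first
      | omega
      | exact FO_num _ _ _ _ _
      | exact hf _ _ _ _ _ _ (by omega)
      | exact hg _ _ _ _ _ _ (by omega)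
      | exact FO_pr _ _ _ _ (by omega) _ _ _
      | exact FO_rel _ _ _ _ (by omega) _ _ _
      | exact FO_succ _ _ _ _ (by omega) _ _
      | exact FO_zero _ _ _ _ (by omega) _
      | apply FO.and
      | apply FO.or
      | apply FO.imp
      | apply FO.ex
      | apply FO.all
  | rfind' f hf =>
    obtain ⟨D₁, hf⟩ := hf
    refine ⟨D₁ + 30, fun v C B L x y hd => ?_⟩
    unfold NS.ev
    repeat'
      first
      | omega
      | exact FO_num _ _ _ _ _
      | exact hf _ _ _ _ _ _ (by omega)
      | exact FO_pr _ _ _ _ (by omega) _ _ _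
      | exact FO_lt _ _ _ _ (by omega) _ _
      | exact FO_rel _ _ _ _ (by omega) _ _ _
      | exact FO_succ _ _ _ _ (by omega) _ _
      | exact FO_zero _ _ _ _ (by omega) _
      | apply FO.and
      | apply FO.or
      | apply FO.not
      | apply FO.imp
      | apply FO.ex
      | apply FO.all


/-! ### Soundness and completeness of evaluation -/

theorem mem_comp_iff (f g : Code) (x y : ℕ) :
    y ∈ Code.eval (.comp f g) x ↔ ∃ z ∈ Code.eval g x, y ∈ Code.eval f z :=
  Part.mem_bind_iff

theorem mem_pair_iff (f g : Code) (x y : ℕ) :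
    y ∈ Code.eval (.pair f g) x ↔
      ∃ a ∈ Code.eval f x, ∃ b ∈ Code.eval g x, Nat.pair a b = y := by
  change y ∈ ((Code.eval f x : Part ℕ).map Nat.pair).bind
    (fun h => (Code.eval g x : Part ℕ).map h) ↔ _
  rw [Part.mem_bind_iff]
  constructor
  · rintro ⟨h, h1, h2⟩
    obtain ⟨a, ha, rfl⟩ := (Part.mem_map_iff _).1 h1
    obtain ⟨b, hb, rfl⟩ := (Part.mem_map_iff _).1 h2
    exact ⟨a, ha, b, hb, rfl⟩
  · rintro ⟨a, ha, b, hb, rfl⟩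
    exact ⟨_, Part.mem_map _ ha, Part.mem_map _ hb⟩

theorem mem_rfind'_iff (f : Code) (a m y : ℕ) :
    y ∈ Code.eval (.rfind' f) (Nat.pair a m) ↔ m ≤ y ∧ 0 ∈ Code.eval f (Nat.pair a y) ∧
      ∀ t, m ≤ t → t < y → ∃ z, z ≠ 0 ∧ z ∈ Code.eval f (Nat.pair a t) := by
  have key : Code.eval (.rfind' f) (Nat.pair a m) =
      (Nat.rfind (fun n => (Code.eval f (Nat.pair a (n + m)) : Part ℕ).map
        (fun m => decide (m = 0)))).map (· + m) := by
    simp only [Code.eval, Nat.unpaired, Nat.unpair_pair]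
    rfl
  rw [key, Part.mem_map_iff]
  constructor
  · rintro ⟨k, hk, rfl⟩
    obtain ⟨h1, h2⟩ := Nat.mem_rfind.1 hk
    refine ⟨by omega, ?_, ?_⟩
    · obtain ⟨z, hz, hz'⟩ := (Part.mem_map_iff _).1 h1
      have : z = 0 := by simpa using hz'
      rwa [this] at hz
    · intro t ht1 ht2
      obtain ⟨z, hz, hz'⟩ := (Part.mem_map_iff _).1 (@h2 (t - m) (by omega))
      refine ⟨z, by simpa using hz', ?_⟩
      rwa [Nat.sub_add_cancel ht1] at hz
  · rintro ⟨h0, h1, h2⟩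
    refine ⟨y - m, Nat.mem_rfind.2 ⟨?_, ?_⟩, by omega⟩
    · refine (Part.mem_map_iff _).2 ⟨0, ?_, by simp⟩
      rwa [Nat.sub_add_cancel h0]
    · intro k hk
      obtain ⟨z, hz, hz'⟩ := h2 (k + m) (by omega) (by omega)
      exact (Part.mem_map_iff _).2 ⟨z, hz', by simpa using hz⟩

/-- The successor step of the pairing enumeration. -/
def nextN (a' b' a b : ℕ) : Prop :=
  (a' < b' ∧ a = a' + 1 ∧ a < b' ∧ b = b') ∨ (b' = a' + 1 ∧ a = b' ∧ b = 0) ∨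
  (b' < a' ∧ a = a' ∧ b = b' + 1) ∨ (a' = b' ∧ a = 0 ∧ b = a' + 1)

theorem nextN_pair {a' b' a b : ℕ} (h : nextN a' b' a b) : Nat.pair a b = Nat.pair a' b' + 1 := by
  unfold Nat.pair
  rcases h with ⟨h1, h2, h3, h4⟩ | ⟨h1, h2, h3⟩ | ⟨h1, h2, h3⟩ | ⟨h1, h2, h3⟩ <;> subst_vars <;>
    split_ifs <;> first | omega | ring_nf

theorem nextN_of_pair {a' b' a b : ℕ} (h : Nat.pair a b = Nat.pair a' b' + 1) :
    nextN a' b' a b := by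
  have : ∃ a₁ b₁, nextN a' b' a₁ b₁ := by
    rcases lt_trichotomy a' b' with h | h | h
    · by_cases h' : a' + 1 < b'
      · exact ⟨a' + 1, b', Or.inl ⟨h, rfl, h', rfl⟩⟩
      · exact ⟨b', 0, Or.inr (Or.inl ⟨by omega, rfl, rfl⟩)⟩
    · exact ⟨0, a' + 1, Or.inr (Or.inr (Or.inr ⟨h, rfl, rfl⟩))⟩
    · exact ⟨a', b' + 1, Or.inr (Or.inr (Or.inl ⟨h, rfl, rfl⟩))⟩
  obtain ⟨a₁, b₁, h1⟩ := this
  have h2 := nextN_pair h1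
  rw [← h, Nat.pair_eq_pair] at h2
  obtain ⟨rfl, rfl⟩ := h2
  exact h1

/-- The numbers of `S` are enumerated, in order, by `e`. -/
structure IsM {V : Type} (S : NS V) {M : ℕ} (e : Fin M → V) : Prop where
  num : ∀ z, S.num z ↔ ∃ i, e i = z
  lt : ∀ i j, S.lt (e i) (e j) ↔ i < j

/-- Every binary relation is represented. -/
def Full {V : Type} (S : NS V) {M : ℕ} (e : Fin M → V) : Prop :=
  ∀ R : ℕ → ℕ → Prop, ∃ A, ∀ i j : Fin M, S.rel A (e i) (e j) ↔ R i j

namespace IsM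
variable {V : Type} {S : NS V} {M : ℕ} {e : Fin M → V}

theorem inj (h : IsM S e) {i j : Fin M} : e i = e j ↔ i = j := by
  constructor
  · intro hij
    rcases lt_trichotomy i j with h1 | h1 | h1
    · have := (h.lt i j).2 h1
      rw [hij, h.lt] at this
      exact absurd this (lt_irrefl _)
    · exact h1
    · have := (h.lt j i).2 h1
      rw [hij, h.lt] at this
      exact absurd this (lt_irrefl _)
  · rintro rfl; rfl

theorem num' (h : IsM S e) (i : Fin M) : S.num (e i) := (h.num _).2 ⟨i, rfl⟩

theorem all_num (h : IsM S e) {P : V → Prop} : (∀ z, S.num z → P z) ↔ ∀ i, P (e i) := by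
  constructor
  · intro h1 i; exact h1 _ (h.num' i)
  · intro h1 z hz
    obtain ⟨i, rfl⟩ := (h.num z).1 hz
    exact h1 i

theorem ex_num (h : IsM S e) {P : V → Prop} : (∃ z, S.num z ∧ P z) ↔ ∃ i, P (e i) := by
  constructor
  · rintro ⟨z, hz, h1⟩
    obtain ⟨i, rfl⟩ := (h.num z).1 hz
    exact ⟨i, h1⟩
  · rintro ⟨i, hi⟩; exact ⟨_, h.num' i, hi⟩

theorem zero (h : IsM S e) {i : Fin M} : S.zero (e i) ↔ i.val = 0 := by
  unfold NS.zero
  rw [h.all_num]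
  simp only [h.lt, Fin.lt_def]
  constructor
  · intro h1
    by_contra h2
    exact h1 ⟨0, by omega⟩ (by simp; omega)
  · intro h1 j; omega

theorem succ (h : IsM S e) {i j : Fin M} : S.succ (e i) (e j) ↔ j.val = i.val + 1 := by
  unfold NS.succ
  rw [h.all_num]
  simp only [h.lt, Fin.lt_def]
  constructor
  · rintro ⟨h1, h2⟩
    by_contra h3
    exact h2 ⟨i.val + 1, by omega⟩ (by simp; omega)
  · intro h1; exact ⟨by omega, fun k => by omega⟩

theorem next (h : IsM S e) {a' b' a b : Fin M} :
    S.next (e a') (e b') (e a) (e b) ↔ nextN a' b' a b := by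
  unfold NS.next nextN
  simp only [h.lt, h.succ, h.zero, h.inj, Fin.lt_def, Fin.ext_iff]

theorem prAx_sound (h : IsM S e) {P Q : V} (hax : S.prAx P Q) : ∀ (k : ℕ) (c a b : Fin M), c.val = k →
    S.rel P (e c) (e a) → S.rel Q (e c) (e b) → Nat.pair a b = c := by
  intro k
  induction k with
  | zero =>
    intro c a b hc h1 h2
    rcases hax _ (h.num' c) _ (h.num' a) _ (h.num' b) h1 h2 with ⟨h3, h4, h5⟩ | h3
    · rw [h.zero] at h3 h4 h5
      rw [h3, h4, h5]; rfl
    · obtain ⟨c', h3⟩ := h.ex_num.1 h3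
      obtain ⟨a', h3⟩ := h.ex_num.1 h3
      obtain ⟨b', h3⟩ := h.ex_num.1 h3
      have := h.succ.1 h3.1
      omega
  | succ k ih =>
    intro c a b hc h1 h2
    rcases hax _ (h.num' c) _ (h.num' a) _ (h.num' b) h1 h2 with ⟨h3, h4, h5⟩ | h3
    · rw [h.zero] at h3; omega
    · obtain ⟨c', h3⟩ := h.ex_num.1 h3
      obtain ⟨a', h3⟩ := h.ex_num.1 h3
      obtain ⟨b', h3, h4, h5, h6⟩ := h.ex_num.1 h3
      have h7 := h.succ.1 h3
      have h8 := ih c' a' b' (by omega) h4 h5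
      rw [nextN_pair (h.next.1 h6), h8, h7]

theorem pr_sound (h : IsM S e) {c a b : Fin M} (hp : S.pr (e c) (e a) (e b)) : Nat.pair a b = c := by
  obtain ⟨P, Q, h1, h2, h3⟩ := hp
  exact h.prAx_sound h1 _ _ _ _ rfl h2 h3

theorem pr_complete (h : IsM S e) (hf : Full S e) {c a b : Fin M} (hp : Nat.pair a b = c) :
    S.pr (e c) (e a) (e b) := by
  obtain ⟨P, hP⟩ := hf (fun x y => (Nat.unpair x).1 = y)
  obtain ⟨Q, hQ⟩ := hf (fun x y => (Nat.unpair x).2 = y)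
  refine ⟨P, Q, ?_, ?_, ?_⟩
  · unfold NS.prAx
    simp only [h.all_num, h.ex_num, hP, hQ, h.zero, h.succ, h.next]
    intro c a b h1 h2
    by_cases hc : c.val = 0
    · left
      rw [hc] at h1 h2
      exact ⟨hc, h1.symm, h2.symm⟩
    · right
      have hl := Nat.unpair_left_le (c.val - 1)
      have hr := Nat.unpair_right_le (c.val - 1)
      refine ⟨⟨c.val - 1, by omega⟩, ⟨(Nat.unpair (c.val - 1)).1, by omega⟩,
        ⟨(Nat.unpair (c.val - 1)).2, by omega⟩, ?_, rfl, rfl, ?_⟩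
      · simp; omega
      · apply nextN_of_pair
        rw [← h1, ← h2]
        simp only [Nat.pair_unpair]
        omega
  · rw [hP, ← hp]; simp
  · rw [hQ, ← hp]; simp

theorem ev_sound (h : IsM S e) (c : Code) : ∀ x y : Fin M, S.ev c (e x) (e y) → y.val ∈ Code.eval c x := by
  induction c with
  | zero =>
    intro x y hxy
    rw [h.zero.1 hxy]
    exact Part.mem_some _
  | succ =>
    intro x y hxy
    rw [h.succ.1 hxy]
    exact Part.mem_some _
  | left =>
    intro x y hxy
    obtain ⟨b, hb⟩ := h.ex_num.1 hxy
    rw [← h.pr_sound hb]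
    simp [Code.eval]
  | right =>
    intro x y hxy
    obtain ⟨b, hb⟩ := h.ex_num.1 hxy
    rw [← h.pr_sound hb]
    simp [Code.eval]
  | pair f g hf hg =>
    intro x y hxy
    obtain ⟨a, h1⟩ := h.ex_num.1 hxy
    obtain ⟨b, h1, h2, h3⟩ := h.ex_num.1 h1
    rw [← h.pr_sound h3]
    rw [mem_pair_iff]
    exact ⟨_, hf _ _ h1, _, hg _ _ h2, rfl⟩
  | comp f g hf hg =>
    intro x y hxy
    obtain ⟨a, h1, h2⟩ := h.ex_num.1 hxy
    rw [mem_comp_iff]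
    exact ⟨_, hg _ _ h1, hf _ _ h2⟩
  | prec f g hf hg =>
    intro x y hxy
    obtain ⟨R, hR, hxy⟩ := hxy
    have key : ∀ (k : ℕ) (x y : Fin M), (Nat.unpair x).2 = k → S.rel R (e x) (e y) →
        y.val ∈ Code.eval (.prec f g) x := by
      intro k
      induction k with
      | zero =>
        intro x y hx hxy
        obtain ⟨a, h1⟩ := h.ex_num.1 (hR _ (h.num' x) _ (h.num' y) hxy)
        obtain ⟨n, h1, h2⟩ := h.ex_num.1 h1
        have h3 := h.pr_sound h1
        rw [← h3] at hx
        simp at hx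
        rcases h2 with ⟨h4, h5⟩ | h4
        · rw [← h3, hx, Code.eval_prec_zero]
          exact hf _ _ h5
        · obtain ⟨m, h4, h5⟩ := h.ex_num.1 h4
          have := h.succ.1 h4
          omega
      | succ k ih =>
        intro x y hx hxy
        obtain ⟨a, h1⟩ := h.ex_num.1 (hR _ (h.num' x) _ (h.num' y) hxy)
        obtain ⟨n, h1, h2⟩ := h.ex_num.1 h1
        have h3 := h.pr_sound h1
        rw [← h3] at hx
        simp at hx
        rcases h2 with ⟨h4, h5⟩ | h4
        · have := h.zero.1 h4
          omega
        · obtain ⟨m, h4, h5⟩ := h.ex_num.1 h4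
          obtain ⟨x', h5, h6⟩ := h.ex_num.1 h5
          obtain ⟨i, h6, h7⟩ := h.ex_num.1 h6
          obtain ⟨q, h7, h8⟩ := h.ex_num.1 h7
          obtain ⟨r, h8, h9⟩ := h.ex_num.1 h8
          have e1 := h.succ.1 h4
          have e2 := h.pr_sound h5
          have e3 := h.pr_sound h7
          have e4 := h.pr_sound h8
          have e5 := hg _ _ h9
          have e6 := ih x' i (by rw [← e2]; simp; omega) h6
          rw [← h3, e1, Code.eval_prec_succ]
          simp only [Part.bind_eq_bind, Part.mem_bind_iff]
          refine ⟨i, ?_, ?_⟩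
          · rwa [e2]
          · rwa [e3, e4]
    exact key _ x y rfl hxy
  | rfind' f hf =>
    intro x y hxy
    obtain ⟨a, h1⟩ := h.ex_num.1 hxy
    obtain ⟨m, h1, h2, h3, h4⟩ := h.ex_num.1 h1
    rw [← h.pr_sound h1, mem_rfind'_iff]
    rw [h.lt, not_lt, Fin.le_def] at h2
    refine ⟨h2, ?_, ?_⟩
    · obtain ⟨q, h5, h6⟩ := h.ex_num.1 h3
      obtain ⟨z, h6, h7⟩ := h.ex_num.1 h6
      have := hf _ _ h7
      rw [h.pr_sound h5, ← h.zero.1 h6]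
      exact this
    · intro t ht1 ht2
      have htM : t < M := lt_trans ht2 y.2
      have := h4 (e ⟨t, htM⟩) (h.num' _) (by rw [h.lt, not_lt, Fin.le_def]; exact ht1)
        (by rw [h.lt, Fin.lt_def]; exact ht2)
      obtain ⟨q, h5, h6⟩ := h.ex_num.1 this
      obtain ⟨z, h6, h7⟩ := h.ex_num.1 h6
      have h8 := hf _ _ h7
      have h9 := h.pr_sound h5
      simp only at h9
      rw [h9]
      exact ⟨z, fun h0 => h6 (h.zero.2 h0), h8⟩

theorem isN_iff (h : IsM S e) (j : ℕ) : ∀ x : Fin M, S.isN j (e x) ↔ x.val = j := by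
  induction j with
  | zero => intro x; exact h.zero
  | succ j ih =>
    intro x
    unfold NS.isN
    rw [h.ex_num]
    simp only [h.succ, ih]
    constructor
    · rintro ⟨i, h1, h2⟩; omega
    · intro h1
      exact ⟨⟨j, by omega⟩, h1, rfl⟩

end IsM

/-- Evaluation of `c` at `x` with value `y` is witnessed in all large full structures. -/
def Comp (c : Code) (x y : ℕ) : Prop :=
  ∀ᶠ M in atTop, ∀ (V : Type) (S : NS V) (e : Fin M → V), IsM S e → Full S e →
    ∀ (hx : x < M) (hy : y < M), S.ev c (e ⟨x, hx⟩) (e ⟨y, hy⟩)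

theorem ev_complete (c : Code) : ∀ x y : ℕ, y ∈ Code.eval c x → Comp c x y := by
  induction c with
  | zero =>
    intro x y hy
    have hy : y = 0 := Part.mem_some_iff.1 hy
    exact Eventually.of_forall fun M V S e h hf hx hy' => h.zero.2 hy
  | succ =>
    intro x y hy
    have hy : y = x + 1 := Part.mem_some_iff.1 hy
    exact Eventually.of_forall fun M V S e h hf hx hy' => h.succ.2 hy
  | left =>
    intro x y hy
    have hy : y = (Nat.unpair x).1 := Part.mem_some_iff.1 hy
    refine Eventually.of_forall fun M V S e h hf hx hy' => h.ex_num.2 ?_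
    have := Nat.unpair_right_le x
    exact ⟨⟨(Nat.unpair x).2, by omega⟩, h.pr_complete hf (by simp [hy])⟩
  | right =>
    intro x y hy
    have hy : y = (Nat.unpair x).2 := Part.mem_some_iff.1 hy
    refine Eventually.of_forall fun M V S e h hf hx hy' => h.ex_num.2 ?_
    have := Nat.unpair_left_le x
    exact ⟨⟨(Nat.unpair x).1, by omega⟩, h.pr_complete hf (by simp [hy])⟩
  | pair f g hf hg =>
    intro x y hy
    rw [mem_pair_iff] at hy
    obtain ⟨a, ha, b, hb, rfl⟩ := hy
    filter_upwards [hf _ _ ha, hg _ _ hb] with M h1 h2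
    intro V S e h hful hx hy
    have := Nat.left_le_pair a b
    have := Nat.right_le_pair a b
    exact h.ex_num.2 ⟨⟨a, by omega⟩, h.ex_num.2 ⟨⟨b, by omega⟩, h1 V S e h hful _ _,
      h2 V S e h hful _ _, h.pr_complete hful rfl⟩⟩
  | comp f g hf hg =>
    intro x y hy
    rw [mem_comp_iff] at hy
    obtain ⟨z, hz, hy⟩ := hy
    filter_upwards [hf _ _ hy, hg _ _ hz, eventually_gt_atTop z] with M h1 h2 h3
    intro V S e h hful hx hy
    exact h.ex_num.2 ⟨⟨z, h3⟩, h2 V S e h hful _ _, h1 V S e h hful _ _⟩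
  | prec f g hf hg =>
    intro x y hy
    obtain ⟨a, n, rfl⟩ : ∃ a n, x = Nat.pair a n :=
      ⟨(Nat.unpair x).1, (Nat.unpair x).2, (Nat.pair_unpair x).symm⟩
    -- a trace of intermediate values
    have tr : ∀ n y, y ∈ Code.eval (.prec f g) (Nat.pair a n) → ∃ s : ℕ → ℕ, s n = y ∧
        s 0 ∈ Code.eval f a ∧
        ∀ m < n, s (m + 1) ∈ Code.eval g (Nat.pair a (Nat.pair m (s m))) := by
      intro n
      induction n with
      | zero =>
        intro y hy
        rw [Code.eval_prec_zero] at hy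
        exact ⟨fun _ => y, rfl, hy, by simp⟩
      | succ n ih =>
        intro y hy
        rw [Code.eval_prec_succ] at hy
        simp only [Part.bind_eq_bind, Part.mem_bind_iff] at hy
        obtain ⟨i, hi, hy⟩ := hy
        obtain ⟨s, h1, h2, h3⟩ := ih i hi
        refine ⟨fun k => if k = n + 1 then y else s k, by simp, by simpa using h2, ?_⟩
        intro m hm
        by_cases hmn : m = n
        · subst hmn
          simp [h1, hy]
        · have := h3 m (by omega)
          have e1 : ¬ (m + 1 = n + 1) := by omega
          have e2 : ¬ (m = n + 1) := by omega
          simpa only [if_neg e1, if_neg e2] using this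
    obtain ⟨s, hs1, hs2, hs3⟩ := tr n y hy
    have ev1 : ∀ᶠ M in atTop, ∀ m ∈ Finset.range n,
        ∀ (V : Type) (S : NS V) (e : Fin M → V), IsM S e → Full S e →
          ∀ (hx : Nat.pair a (Nat.pair m (s m)) < M) (hy : s (m + 1) < M),
            S.ev g (e ⟨_, hx⟩) (e ⟨_, hy⟩) := by
      rw [Filter.eventually_all_finset]
      intro m hm
      exact hg _ _ (hs3 m (Finset.mem_range.1 hm))
    have ev2 : ∀ᶠ M in atTop, ∀ m ∈ Finset.range (n + 1),
        Nat.pair a (Nat.pair m (s m)) < M ∧ s m < M ∧ Nat.pair a m < M := by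
      rw [Filter.eventually_all_finset]
      intro m hm
      filter_upwards [eventually_gt_atTop (Nat.pair a (Nat.pair m (s m))),
        eventually_gt_atTop (s m), eventually_gt_atTop (Nat.pair a m)] with M h1 h2 h3
      exact ⟨h1, h2, h3⟩
    filter_upwards [ev1, ev2, hf _ _ hs2] with M h1 h2 h3
    intro V S e h hful hx hy
    obtain ⟨R, hR⟩ := hful (fun u w => ∃ m ≤ n, u = Nat.pair a m ∧ w = s m)
    refine ⟨R, ?_, ?_⟩
    · simp only [h.all_num, h.ex_num, hR]
      rintro u w ⟨m, hm, hu, hw⟩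
      have b1 := Nat.left_le_pair a m
      have b2 := Nat.right_le_pair a m
      have b3 := h2 m (by simp; omega)
      refine ⟨⟨a, by omega⟩, ⟨m, by omega⟩, h.pr_complete hful hu.symm, ?_⟩
      rcases m with _ | m
      · left
        refine ⟨h.zero.2 rfl, ?_⟩
        have := h3 V S e h hful (by omega) (by omega)
        convert this
      · right
        have b4 := h2 m (by simp; omega)
        have b5 := Nat.right_le_pair a (Nat.pair m (s m))
        refine ⟨⟨m, by omega⟩, h.succ.2 rfl, ⟨Nat.pair a m, b4.2.2⟩, h.pr_complete hful rfl,
          ⟨s m, b4.2.1⟩, ⟨m, by omega, rfl, rfl⟩, ⟨Nat.pair m (s m), by omega⟩,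
          h.pr_complete hful rfl, ⟨_, b4.1⟩, h.pr_complete hful rfl, ?_⟩
        have := h1 m (by simp; omega) V S e h hful b4.1 b3.2.1
        convert this
    · rw [hR]
      exact ⟨n, le_rfl, rfl, hs1.symm⟩
  | rfind' f hf =>
    intro x y hy
    obtain ⟨a, m, rfl⟩ : ∃ a n, x = Nat.pair a n :=
      ⟨(Nat.unpair x).1, (Nat.unpair x).2, (Nat.pair_unpair x).symm⟩
    rw [mem_rfind'_iff] at hy
    obtain ⟨hmy, h0, hlt⟩ := hy
    choose! z hz0 hz using hlt
    have ev1 : ∀ᶠ M in atTop, ∀ t ∈ Finset.Ico m y,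
        (∀ (V : Type) (S : NS V) (e : Fin M → V), IsM S e → Full S e →
          ∀ (hx : Nat.pair a t < M) (hy : z t < M),
            S.ev f (e ⟨_, hx⟩) (e ⟨_, hy⟩)) ∧ Nat.pair a t < M ∧ z t < M := by
      rw [Filter.eventually_all_finset]
      intro t ht
      rw [Finset.mem_Ico] at ht
      filter_upwards [hf _ _ (hz t ht.1 ht.2), eventually_gt_atTop (Nat.pair a t),
        eventually_gt_atTop (z t)] with M h1 h2 h3
      exact ⟨h1, h2, h3⟩
    filter_upwards [ev1, hf _ _ h0, eventually_gt_atTop (Nat.pair a y)] with M h1 h2 h3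
    intro V S e h hful hx hy
    have b1 := Nat.left_le_pair a m
    have b2 := Nat.right_le_pair a m
    refine h.ex_num.2 ⟨⟨a, by omega⟩, h.ex_num.2 ⟨⟨m, by omega⟩, h.pr_complete hful rfl, ?_, ?_, ?_⟩⟩
    · rw [h.lt, not_lt, Fin.le_def]; exact hmy
    · exact h.ex_num.2 ⟨⟨_, h3⟩, h.pr_complete hful rfl, h.ex_num.2 ⟨⟨0, by omega⟩,
        h.zero.2 rfl, h2 V S e h hful _ _⟩⟩
    · rw [h.all_num]
      intro t ht1 ht2
      rw [h.lt, not_lt, Fin.le_def] at ht1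
      rw [h.lt, Fin.lt_def] at ht2
      simp only at ht1 ht2
      obtain ⟨c1, c2, c3⟩ := h1 t.val (by rw [Finset.mem_Ico]; exact ⟨ht1, ht2⟩)
      exact h.ex_num.2 ⟨⟨_, c2⟩, h.pr_complete hful rfl, h.ex_num.2 ⟨⟨_, c3⟩,
        fun h0 => hz0 _ ht1 ht2 (h.zero.1 h0), c1 V S e h hful _ _⟩⟩


/-! ### The universal coding graph -/

/-- Vertices of the coding graph for numbers below `M`. -/
inductive HV (M : ℕ) : Type
  | apex : HV M
  | C : HV M
  | B : HV M
  | col (R : Fin M → Fin M → Bool) : HV M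
  | num (x : Fin M) : HV M
  | a (R : Fin M → Fin M → Bool) (x y : Fin M) : HV M
  | b (R : Fin M → Fin M → Bool) (x y : Fin M) : HV M

/-- Directed version of the edges of the coding graph. -/
inductive hE {M : ℕ} : HV M → HV M → Prop
  | ap (w : HV M) (h : w ≠ .apex) : hE .apex w
  | C (x : Fin M) : hE .C (.num x)
  | B (R : Fin M → Fin M → Bool) (x y : Fin M) : hE .B (.b R x y)
  | col (R : Fin M → Fin M → Bool) (x y : Fin M) : hE (.col R) (.a R x y)
  | na (R : Fin M → Fin M → Bool) (x y : Fin M) (h : R x y = true) : hE (.num x) (.a R x y)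
  | ab (R : Fin M → Fin M → Bool) (x y : Fin M) : hE (.a R x y) (.b R x y)
  | bn (R : Fin M → Fin M → Bool) (x y : Fin M) : hE (.b R x y) (.num y)

/-- Adjacency in the coding graph. -/
def HAdj {M : ℕ} (u w : HV M) : Prop := hE u w ∨ hE w u

theorem hE_ne {M : ℕ} {u w : HV M} (h : hE u w) : u ≠ w := by
  cases h with
  | ap w h => exact fun h' => h h'.symm
  | _ => simp

theorem HAdj_symm {M : ℕ} {u w : HV M} (h : HAdj u w) : HAdj w u := h.symm

theorem HAdj_irrefl {M : ℕ} (u : HV M) : ¬ HAdj u u := by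
  rintro (h | h) <;> exact hE_ne h rfl

instance {M : ℕ} : Finite (HV M) := by
  let F := Fin M → Fin M → Bool
  let f : HV M → Fin 3 ⊕ F ⊕ Fin M ⊕ (F × Fin M × Fin M) ⊕ (F × Fin M × Fin M) := fun u =>
    match u with
    | .apex => .inl 0
    | .C => .inl 1
    | .B => .inl 2
    | .col R => .inr (.inl R)
    | .num x => .inr (.inr (.inl x))
    | .a R x y => .inr (.inr (.inr (.inl (R, x, y))))
    | .b R x y => .inr (.inr (.inr (.inr (R, x, y))))
  refine Finite.of_injective f ?_
  intro u w h
  cases u <;> cases w <;> simp_all [f]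

/-- `G` contains an induced copy of `H` that contains all neighbours of the image of `w₀`. -/
def Copy {W V : Type} (H : W → W → Prop) (w₀ : W) (G : V → V → Prop) : Prop :=
  ∃ f : W → V, Function.Injective f ∧ (∀ u w, G (f u) (f w) ↔ H u w) ∧
    ∀ z, G (f w₀) z → ∃ w, f w = z

section
variable {M : ℕ}

theorem HAdj_apex {w : HV M} : HAdj .apex w ↔ w ≠ .apex := by
  constructor
  · rintro h rfl; exact HAdj_irrefl _ h
  · intro h; exact Or.inl (hE.ap w h)

theorem HAdj_C {w : HV M} (h : HAdj .C w) (h' : w ≠ .apex) : ∃ x, w = .num x := by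
  rcases h with h | h <;> cases h
  · exact ⟨_, rfl⟩
  · exact absurd rfl h'

theorem HAdj_rel {R : Fin M → Fin M → Bool} {x y : Fin M} {a b : HV M}
    (ha : a ≠ .apex) (hb : b ≠ .apex) (h1 : HAdj (.col R) a) (h2 : HAdj .B b)
    (h3 : HAdj (.num x) a) (h4 : HAdj a b) (h5 : HAdj b (.num y)) : R x y = true := by
  obtain ⟨x₁, y₁, rfl⟩ : ∃ x y, a = .a R x y := by
    rcases h1 with h | h <;> cases h
    · exact ⟨_, _, rfl⟩
    · exact absurd rfl ha
  obtain ⟨R₂, x₂, y₂, rfl⟩ : ∃ R x y, b = .b R x y := by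
    rcases h2 with h | h <;> cases h
    · exact ⟨_, _, _, rfl⟩
    · exact absurd rfl hb
  have e3 : x = x₁ ∧ R x₁ y₁ = true := by
    rcases h3 with h | h
    · cases h with
      | na _ _ _ h => exact ⟨rfl, h⟩
    · cases h
  have e4 : x₁ = x₂ ∧ y₁ = y₂ := by
    rcases h4 with h | h
    · cases h; exact ⟨rfl, rfl⟩
    · cases h
  have e5 : y₂ = y := by
    rcases h5 with h | h
    · cases h; rfl
    · cases h
  obtain ⟨rfl, h⟩ := e3
  obtain ⟨rfl, rfl⟩ := e4
  subst e5
  exact h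

theorem copy_rel {V : Type} {G : V → V → Prop} {f : HV M → V}
    (h2 : ∀ u w, G (f u) (f w) ↔ HAdj u w)
    (h3 : ∀ z, G (f .apex) z → ∃ w, f w = z) (L : V) (R : Fin M → Fin M → Bool) (i j : Fin M) :
    (mk G (f .apex) (f .C) (f .B) L).rel (f (.col R)) (f (.num i)) (f (.num j)) ↔
      R i j = true := by
  constructor
  · rintro ⟨a, b, g1, g2, -, g4, g5, g6, g7, g8⟩
    obtain ⟨a, rfl⟩ := h3 a g1
    obtain ⟨b, rfl⟩ := h3 b g2
    rw [h2] at *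
    exact HAdj_rel (HAdj_apex.1 g1) (HAdj_apex.1 g2) g4 g5 g6 g7 g8
  · intro h
    refine ⟨f (.a R i j), f (.b R i j), ?_, ?_, ?_, ?_, ?_, ?_, ?_, ?_⟩ <;> rw [h2]
    · exact HAdj_apex.2 (by simp)
    · exact HAdj_apex.2 (by simp)
    · exact HAdj_apex.2 (by simp)
    · exact Or.inl (hE.col _ _ _)
    · exact Or.inl (hE.B _ _ _)
    · exact Or.inl (hE.na _ _ _ h)
    · exact Or.inl (hE.ab _ _ _)
    · exact Or.inl (hE.bn _ _ _)

theorem copy_isM {V : Type} {G : V → V → Prop} {f : HV M → V}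
    (h2 : ∀ u w, G (f u) (f w) ↔ HAdj u w)
    (h3 : ∀ z, G (f .apex) z → ∃ w, f w = z) :
    IsM (mk G (f .apex) (f .C) (f .B) (f (.col fun x y => decide (x < y))))
      (fun i => f (.num i)) where
  num z := by
    constructor
    · rintro ⟨g1, g2⟩
      obtain ⟨w, rfl⟩ := h3 z g1
      rw [h2] at g1 g2
      obtain ⟨x, rfl⟩ := HAdj_C g2 (HAdj_apex.1 g1)
      exact ⟨x, rfl⟩
    · rintro ⟨i, rfl⟩
      refine ⟨?_, ?_⟩ <;> rw [h2]
      · exact HAdj_apex.2 (by simp)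
      · exact Or.inl (hE.C _)
  lt i j := by
    have := copy_rel h2 h3 (f (.col fun x y => decide (x < y))) (fun x y => decide (x < y)) i j
    rw [decide_eq_true_iff] at this
    exact this

theorem copy_full {V : Type} {G : V → V → Prop} {f : HV M → V}
    (h2 : ∀ u w, G (f u) (f w) ↔ HAdj u w)
    (h3 : ∀ z, G (f .apex) z → ∃ w, f w = z) (L : V) :
    Full (mk G (f .apex) (f .C) (f .B) L) (fun i => f (.num i)) := by
  classical
  intro R
  refine ⟨f (.col fun x y => decide (R x y)), fun i j => ?_⟩
  rw [copy_rel h2 h3]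
  simp
end

theorem lin_isM {V : Type} [Finite V] {S : NS V} (h : S.lin) :
    ∃ (M : ℕ) (e : Fin M → V), IsM S e := by
  classical
  obtain ⟨h1, h2, h3⟩ := h
  let X := {x : V // S.num x}
  let r : X → X → Prop := fun x y => S.lt x.1 y.1
  have : IsStrictTotalOrder X r :=
    { trichotomous := by
        intro x y h4 h5
        rcases h3 x.1 x.2 y.1 y.2 with h | h | h
        · exact absurd h h4
        · exact Subtype.ext h
        · exact absurd h h5
      irrefl := fun x => h1 x.1 x.2
      trans := fun x y z => h2 x.1 x.2 y.1 y.2 z.1 z.2 }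
  let _ : LinearOrder X := linearOrderOfSTO r
  have : Fintype X := Fintype.ofFinite X
  let e := monoEquivOfFin X rfl
  refine ⟨Fintype.card X, fun i => (e i).1, ?_, ?_⟩
  · intro z
    constructor
    · intro hz
      exact ⟨e.symm ⟨z, hz⟩, by simp⟩
    · rintro ⟨i, rfl⟩; exact (e i).2
  · intro i j
    exact e.lt_iff_lt

/-- The coding sentences. -/
def Phi (c : Code) (j : ℕ) {V : Type} (G : V → V → Prop) : Prop :=
  ∃ v, ∃ C, ∃ B, ∃ L, (mk G v C B L).lin ∧ ∃ x, (mk G v C B L).num x ∧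
    ∃ y, (mk G v C B L).num y ∧ (mk G v C B L).isN j x ∧ (mk G v C B L).ev c x y

theorem FO_Phi (c : Code) : ∃ D, ∀ j, FO 0 (D + j) (fun _ G _ => Phi c j G) := by
  obtain ⟨D, hD⟩ := FO_ev c
  refine ⟨D + 20, fun j => ?_⟩
  refine FO.ex (by omega) (FO.ex (by omega) (FO.ex (by omega) (FO.ex (by omega) (FO.and
    (FO_lin _ _ _ _ (by omega)) (FO.ex (by omega) (FO.and (FO_num _ _ _ _ _) (FO.ex (by omega)
      (FO.and (FO_num _ _ _ _ _) (FO.and (FO_isN _ _ _ _ _ _ (by omega))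
        (hD _ _ _ _ _ _ (by omega)))))))))))

theorem Phi_sound {c : Code} {j y n : ℕ} (hy : y ∈ Code.eval c j) {G : Fin n → Fin n → Prop}
    (h : Phi c j G) : y < n := by
  obtain ⟨v, C, B, L, h1, h2⟩ := h
  obtain ⟨M, e, he⟩ := lin_isM h1
  obtain ⟨x, h2⟩ := he.ex_num.1 h2
  obtain ⟨z, h2, h3⟩ := he.ex_num.1 h2
  rw [he.isN_iff] at h2
  have h4 := he.ev_sound c _ _ h3
  rw [h2] at h4
  have h5 := Part.mem_unique hy h4
  have h6 : Function.Injective e := fun a b hab => he.inj.1 hab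
  have h7 := Fintype.card_le_of_injective e h6
  simp at h7
  omega

theorem Phi_complete {c : Code} {j y : ℕ} (hy : y ∈ Code.eval c j) :
    ∃ M, ∀ (V : Type) (G : V → V → Prop), Copy (HAdj (M := M)) .apex G → Phi c j G := by
  have := ev_complete c j y hy
  obtain ⟨M, hM, h1, h2⟩ :=
    (this.and ((eventually_gt_atTop j).and (eventually_gt_atTop y))).exists
  refine ⟨M, fun V G hc => ?_⟩
  obtain ⟨f, f1, f2, f3⟩ := hc
  have he := copy_isM f2 f3
  have hf := copy_full f2 f3 (f (.col fun x y => decide (x < y)))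
  refine ⟨f .apex, f .C, f .B, f (.col fun x y => decide (x < y)), ?_, ?_⟩
  · unfold NS.lin
    simp only [he.all_num, he.lt, he.inj]
    exact ⟨fun x => lt_irrefl x, fun x y z => lt_trans, fun x y => lt_trichotomy x y⟩
  · exact he.ex_num.2 ⟨⟨j, h1⟩, he.ex_num.2 ⟨⟨y, h2⟩, (he.isN_iff j _).2 rfl,
      hM V _ _ he hf h1 h2⟩⟩

theorem main_sentence (c : Code) : ∃ D, ∀ j y, y ∈ Code.eval c j →
    ∃ φ : Language.graph.Sentence, qDepth φ ≤ D + j ∧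
      (∀ n (ω : Sample n), SatL ω φ → y < n) ∧
      ∃ M, ∀ n (ω : Sample n), Copy (HAdj (M := M)) .apex (sampleAdj ω) → SatL ω φ := by
  obtain ⟨D, hD⟩ := FO_Phi c
  refine ⟨D, fun j y hy => ?_⟩
  obtain ⟨φ, h1, h2⟩ := hD j
  have h3 : ∀ n (ω : Sample n), SatL ω φ ↔ Phi c j (sampleAdj ω) := fun n ω =>
    h2 (Fin n) (sampleAdj ω) default
  obtain ⟨M, hM⟩ := Phi_complete hy
  exact ⟨φ, h1, fun n ω h => Phi_sound hy ((h3 n ω).1 h), M,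
    fun n ω h => (h3 n ω).2 (hM _ _ h)⟩


/-! ### Probability -/

section Prob
open scoped Classical

/-- The length of a potential edge. -/
def elen {n : ℕ} (e : EdgeIdx n) : ℕ := e.1.2.val - e.1.1.val

/-- The weight of a single edge value. -/
noncomputable def wt (p : ℕ → ℝ) {n : ℕ} (e : EdgeIdx n) (b : Bool) : ℝ :=
  if b then p (elen e) else 1 - p (elen e)

theorem Pr_cyl (p : ℕ → ℝ) {n : ℕ} (S : Finset (EdgeIdx n)) (f : EdgeIdx n → Bool) :
    Pr p n (fun ω => ∀ e ∈ S, ω e = f e) = ∏ e ∈ S, wt p e (f e) := by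
  have h1 : Pr p n (fun ω => ∀ e ∈ S, ω e = f e) =
      ∑ ω ∈ Fintype.piFinset (fun e => if e ∈ S then {f e} else (Finset.univ : Finset Bool)),
        ∏ e, wt p e (ω e) := by
    have h0 : Pr p n (fun ω => ∀ e ∈ S, ω e = f e) =
        ∑ ω : Sample n, if (∀ e ∈ S, ω e = f e) then ∏ e, wt p e (ω e) else 0 := by
      refine Finset.sum_congr rfl fun ω _ => ?_
      by_cases hω : ∀ e ∈ S, ω e = f e
      · rw [if_pos hω, if_pos hω]; rfl
      · rw [if_neg hω, if_neg hω]
    rw [h0, ← Finset.sum_filter]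
    refine Finset.sum_congr ?_ (fun ω _ => rfl)
    ext ω
    simp only [Finset.mem_filter, Finset.mem_univ, true_and, Fintype.mem_piFinset]
    refine forall_congr' fun e => ?_
    by_cases he : e ∈ S <;> simp [he]
  rw [h1, ← Finset.prod_univ_sum, ← Finset.prod_subset (Finset.subset_univ S)]
  · refine Finset.prod_congr rfl fun e he => ?_
    simp [he]
  · intro e _ he
    simp [he, wt]

theorem Pr_true (p : ℕ → ℝ) (n : ℕ) : ∑ ω : Sample n, sampleWeight p ω = 1 := by
  have := Pr_cyl p (n := n) ∅ (fun _ => true)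
  simpa [Pr] using this

theorem weight_nonneg {p : ℕ → ℝ} (hp : ∀ i, 0 < p i ∧ p i < 1) {n : ℕ} (ω : Sample n) :
    0 ≤ sampleWeight p ω := by
  refine Finset.prod_nonneg fun e _ => ?_
  have := hp (e.1.2.val - e.1.1.val)
  split_ifs <;> linarith

theorem Pr_mono {p : ℕ → ℝ} (hp : ∀ i, 0 < p i ∧ p i < 1) {n : ℕ} {P Q : Sample n → Prop}
    (h : ∀ ω, P ω → Q ω) : Pr p n P ≤ Pr p n Q := by
  refine Finset.sum_le_sum fun ω _ => ?_
  have := weight_nonneg hp ω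
  by_cases h1 : P ω
  · simp [h1, h ω h1]
  · simp only [h1, if_false]
    split_ifs <;> linarith

theorem Pr_compl {p : ℕ → ℝ} {n : ℕ} (P : Sample n → Prop) :
    Pr p n P = 1 - Pr p n (fun ω => ¬ P ω) := by
  rw [← Pr_true p n, Pr, Pr, ← Finset.sum_sub_distrib]
  refine Finset.sum_congr rfl fun ω _ => ?_
  by_cases h1 : P ω <;> simp [h1]

theorem Pr_nonneg {p : ℕ → ℝ} (hp : ∀ i, 0 < p i ∧ p i < 1) {n : ℕ} (P : Sample n → Prop) :
    0 ≤ Pr p n P := by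
  refine Finset.sum_nonneg fun ω _ => ?_
  have := weight_nonneg hp ω
  split_ifs <;> linarith

theorem Pr_le_one {p : ℕ → ℝ} (hp : ∀ i, 0 < p i ∧ p i < 1) {n : ℕ} (P : Sample n → Prop) :
    Pr p n P ≤ 1 := by
  rw [Pr_compl]
  linarith [Pr_nonneg hp (fun ω => ¬ P ω)]

/-- Second moment method. -/
theorem second_moment {p : ℕ → ℝ} (hp : ∀ i, 0 < p i ∧ p i < 1) {n : ℕ} (s : Finset ℕ)
    (E : ℕ → Sample n → Prop) (K : ℝ)
    (hμ : 0 < ∑ j ∈ s, Pr p n (E j))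
    (h : ∑ j ∈ s, ∑ l ∈ s, (Pr p n (fun ω => E j ω ∧ E l ω) - Pr p n (E j) * Pr p n (E l)) ≤
      K * ∑ j ∈ s, Pr p n (E j)) :
    Pr p n (fun ω => ∀ j ∈ s, ¬ E j ω) * ∑ j ∈ s, Pr p n (E j) ≤ K := by
  set μ := ∑ j ∈ s, Pr p n (E j) with hμd
  let I : ℕ → Sample n → ℝ := fun j ω => if E j ω then 1 else 0
  have hI : ∀ j, Pr p n (E j) = ∑ ω, sampleWeight p ω * I j ω := by
    intro j
    refine Finset.sum_congr rfl fun ω _ => ?_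
    by_cases h1 : E j ω <;> simp [I, h1]
  have hII : ∀ j l, Pr p n (fun ω => E j ω ∧ E l ω) =
      ∑ ω, sampleWeight p ω * (I j ω * I l ω) := by
    intro j l
    refine Finset.sum_congr rfl fun ω _ => ?_
    by_cases h1 : E j ω <;> by_cases h2 : E l ω <;> simp [I, h1, h2]
  have hX : ∑ ω, sampleWeight p ω * (∑ j ∈ s, I j ω) = μ := by
    rw [hμd]
    simp only [Finset.mul_sum, hI]
    rw [Finset.sum_comm]
  have hXX : ∑ ω, sampleWeight p ω * (∑ j ∈ s, I j ω) ^ 2 =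
      ∑ j ∈ s, ∑ l ∈ s, Pr p n (fun ω => E j ω ∧ E l ω) := by
    have hsq : ∀ ω, (∑ j ∈ s, I j ω) ^ 2 = ∑ j ∈ s, ∑ l ∈ s, I j ω * I l ω :=
      fun ω => by rw [sq, Finset.sum_mul_sum]
    simp only [hsq, hII, Finset.mul_sum]
    rw [Finset.sum_comm]
    refine Finset.sum_congr rfl fun j _ => ?_
    rw [Finset.sum_comm]
  have hvar : ∑ ω, sampleWeight p ω * ((∑ j ∈ s, I j ω) - μ) ^ 2 ≤ K * μ := by
    have e1 : ∀ μ : ℝ, ∑ ω, sampleWeight p ω * ((∑ j ∈ s, I j ω) - μ) ^ 2 =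
        ∑ ω, sampleWeight p ω * (∑ j ∈ s, I j ω) ^ 2
          - 2 * μ * ∑ ω, sampleWeight p ω * (∑ j ∈ s, I j ω)
          + μ ^ 2 * ∑ ω : Sample n, sampleWeight p ω := by
      intro μ
      rw [Finset.mul_sum, Finset.mul_sum, ← Finset.sum_sub_distrib, ← Finset.sum_add_distrib]
      refine Finset.sum_congr rfl fun ω _ => ?_
      ring
    rw [e1, hX, Pr_true, hXX]
    have e2 : ∑ j ∈ s, ∑ l ∈ s, Pr p n (E j) * Pr p n (E l) = μ ^ 2 := by
      rw [sq, hμd, Finset.sum_mul_sum]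
    simp only [Finset.sum_sub_distrib] at h
    rw [e2] at h
    linarith
  have hlow : Pr p n (fun ω => ∀ j ∈ s, ¬ E j ω) * μ ^ 2 ≤
      ∑ ω, sampleWeight p ω * ((∑ j ∈ s, I j ω) - μ) ^ 2 := by
    rw [Pr, Finset.sum_mul]
    refine Finset.sum_le_sum fun ω _ => ?_
    have hw := weight_nonneg hp ω
    by_cases h1 : ∀ j ∈ s, ¬ E j ω
    · rw [if_pos h1, Finset.sum_eq_zero (fun j hj => by simp [I, h1 j hj])]
      simp
    · rw [if_neg h1, zero_mul]
      positivity
  have : (Pr p n (fun ω => ∀ j ∈ s, ¬ E j ω) * μ) * μ ≤ K * μ := by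
    calc _ = Pr p n (fun ω => ∀ j ∈ s, ¬ E j ω) * μ ^ 2 := by ring
      _ ≤ _ := hlow.trans hvar
  exact le_of_mul_le_mul_right this hμ

theorem prod_anti {ι : Type*} {s t : Finset ι} (hst : s ⊆ t) (g : ι → ℝ)
    (h0 : ∀ i, 0 ≤ g i) (h1 : ∀ i, g i ≤ 1) : ∏ i ∈ t, g i ≤ ∏ i ∈ s, g i := by
  rw [← Finset.prod_sdiff hst]
  have : ∏ i ∈ t \ s, g i ≤ 1 := Finset.prod_le_one (fun i _ => h0 i) (fun i _ => h1 i)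
  exact mul_le_of_le_one_left (Finset.prod_nonneg fun i _ => h0 i) this

theorem wt_bounds {p : ℕ → ℝ} (hp : ∀ i, 0 < p i ∧ p i < 1) {n : ℕ} (e : EdgeIdx n) (b : Bool) :
    0 < wt p e b ∧ wt p e b < 1 := by
  have := hp (elen e)
  unfold wt
  split_ifs <;> constructor <;> linarith

section Blocks
variable {h : ℕ} (hh : 0 < h) (H : Fin h → Fin h → Prop) (i₀ : Fin h)

/-- The common pattern: every block carries a copy of `H`, no edges between blocks. -/
noncomputable def pat (n : ℕ) (e : EdgeIdx n) : Bool :=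
  decide (e.1.1.val / h = e.1.2.val / h ∧
    H ⟨e.1.1.val % h, Nat.mod_lt _ hh⟩ ⟨e.1.2.val % h, Nat.mod_lt _ hh⟩)

/-- The edges inside block `j`. -/
noncomputable def inn (h : ℕ) (n j : ℕ) : Finset (EdgeIdx n) :=
  Finset.univ.filter fun e => e.1.1.val / h = j ∧ e.1.2.val / h = j

/-- The edges of interest for block `j`: inside the block or at its special vertex. -/
noncomputable def Sj {h : ℕ} (i₀ : Fin h) (n j : ℕ) : Finset (EdgeIdx n) :=
  Finset.univ.filter fun e => (e.1.1.val / h = j ∧ e.1.2.val / h = j) ∨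
    e.1.1.val = j * h + i₀ ∨ e.1.2.val = j * h + i₀

theorem block_div {h : ℕ} (hh : 0 < h) {j i : ℕ} (hi : i < h) : (j * h + i) / h = j := by
  rw [mul_comm, Nat.mul_add_div hh, Nat.div_eq_of_lt hi, add_zero]

theorem block_mod {j i : ℕ} (hi : i < h) : (j * h + i) % h = i := by
  rw [mul_comm, Nat.mul_add_mod, Nat.mod_eq_of_lt hi]

theorem cyl_copy (hsymm : ∀ u w, H u w → H w u) (hirr : ∀ u, ¬ H u u) {n j : ℕ}
    (hj : (j + 1) * h ≤ n) (ω : Sample n) (hω : ∀ e ∈ Sj i₀ n j, ω e = pat hh H n e) :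
    Copy H i₀ (sampleAdj ω) := by
  have hlt : ∀ i : Fin h, j * h + i.val < n := fun i => by
    have := i.2
    rw [add_mul] at hj; omega
  have hedge : ∀ u w : Fin h, ∀ huw : u < w,
      ω ⟨(⟨j * h + u, hlt u⟩, ⟨j * h + w, hlt w⟩), by
        rw [Fin.lt_def] at huw ⊢; simp; exact huw⟩ = decide (H u w) := by
    intro u w huw
    rw [hω]
    · simp only [pat, block_div hh u.2, block_div hh w.2, block_mod u.2, block_mod w.2]
      simp
    · simp [Sj, block_div hh u.2, block_div hh w.2]
  refine ⟨fun i => ⟨j * h + i, hlt i⟩, ?_, ?_, ?_⟩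
  · intro a b hab
    simpa [Fin.ext_iff] using hab
  · have hadj : ∀ u w : Fin h, u < w →
        (adjVal ω (j * h + u) (j * h + w) ↔ H u w) := by
      intro u w huw
      have := hedge u w huw
      constructor
      · rintro ⟨e, he, ⟨h1, h2⟩ | ⟨h1, h2⟩⟩
        · have e1 : e = ⟨(⟨j * h + u, hlt u⟩, ⟨j * h + w, hlt w⟩), by
            rw [Fin.lt_def] at huw ⊢; simp; exact huw⟩ :=
            Subtype.ext (Prod.ext (Fin.ext h1) (Fin.ext h2))
          rw [e1, this] at he
          simpa using he
        · have := e.2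
          rw [Fin.lt_def] at this huw
          omega
      · intro hH
        exact ⟨_, by rw [this]; simpa using hH, Or.inl ⟨rfl, rfl⟩⟩
    have hsw : ∀ a b, adjVal ω a b ↔ adjVal ω b a := by
      intro a b
      unfold adjVal
      constructor <;> rintro ⟨e, he, h1⟩ <;> exact ⟨e, he, h1.symm⟩
    intro u w
    change adjVal ω (j * h + u) (j * h + w) ↔ H u w
    rcases lt_trichotomy u w with h1 | h1 | h1
    · exact hadj u w h1
    · subst h1
      constructor
      · rintro ⟨e, he, h1⟩
        have := e.2
        rw [Fin.lt_def] at this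
        omega
      · intro h1; exact absurd h1 (hirr u)
    · rw [hsw, hadj w u h1]
      exact ⟨hsymm _ _, hsymm _ _⟩
  · rintro z ⟨e, he, h1⟩
    have hS : e ∈ Sj i₀ n j := by
      simp only [Sj, Finset.mem_filter, Finset.mem_univ, true_and]
      rcases h1 with h1 | h1
      · exact Or.inr (Or.inl h1.1)
      · exact Or.inr (Or.inr h1.2)
    rw [hω e hS] at he
    simp only [pat, decide_eq_true_iff] at he
    have hd := he.1
    have hz : z.val / h = j := by
      have hb := block_div hh (j := j) i₀.2
      rcases h1 with ⟨h1, h2⟩ | ⟨h1, h2⟩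
      · rw [h1, h2] at hd
        simp only [hb] at hd
        exact hd.symm
      · rw [h1, h2] at hd
        simp only [hb] at hd
        exact hd
    refine ⟨⟨z.val % h, Nat.mod_lt _ hh⟩, Fin.ext ?_⟩
    simp only
    rw [← hz, mul_comm]
    exact Nat.div_add_mod _ _

end Blocks
end Prob

section Prob2
open scoped Classical

theorem prod_union_ge {ι : Type*} [DecidableEq ι] (s t : Finset ι) (g : ι → ℝ)
    (h0 : ∀ i, 0 ≤ g i) (h1 : ∀ i, g i ≤ 1) :
    (∏ i ∈ s, g i) * ∏ i ∈ t, g i ≤ ∏ i ∈ s ∪ t, g i := by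
  rw [← Finset.prod_union_inter]
  have : ∏ i ∈ s ∩ t, g i ≤ 1 := Finset.prod_le_one (fun i _ => h0 i) (fun i _ => h1 i)
  exact mul_le_of_le_one_right (Finset.prod_nonneg fun i _ => h0 i) this

theorem elen_mem {n : ℕ} (e : EdgeIdx n) : elen e ∈ Finset.Icc 1 n := by
  have h1 := e.2
  have h2 := e.1.2.2
  rw [Fin.lt_def] at h1
  simp only [elen, Finset.mem_Icc]
  omega

theorem prod_side {p : ℕ → ℝ} (hp : ∀ i, 0 < p i ∧ p i < 1) {n : ℕ} (T : Finset (EdgeIdx n))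
    (f : EdgeIdx n → Bool) (hf : ∀ e ∈ T, f e = false)
    (hT : ∀ e ∈ T, ∀ e' ∈ T, elen e = elen e' → e = e') :
    ∏ i ∈ Finset.Icc 1 n, (1 - p i) ≤ ∏ e ∈ T, wt p e (f e) := by
  have e1 : ∏ e ∈ T, wt p e (f e) = ∏ d ∈ T.image elen, (1 - p d) := by
    rw [Finset.prod_image (fun e he e' he' h => hT e he e' he' h)]
    refine Finset.prod_congr rfl fun e he => ?_
    simp [wt, hf e he]
  rw [e1]
  refine prod_anti ?_ (fun i => 1 - p i) (fun i => ?_) (fun i => ?_)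
  · intro d hd
    obtain ⟨e, _, rfl⟩ := Finset.mem_image.1 hd
    exact elen_mem e
  · linarith [(hp i).2]
  · linarith [(hp i).1]

theorem sum_side {p : ℕ → ℝ} (hp : ∀ i, 0 < p i ∧ p i < 1) {n : ℕ} (T : Finset ℕ)
    (f : ℕ → ℕ) (hf : ∀ l ∈ T, f l ∈ Finset.Icc 1 n)
    (hT : ∀ e ∈ T, ∀ e' ∈ T, f e = f e' → e = e') :
    ∑ l ∈ T, p (f l) ≤ ∑ i ∈ Finset.Icc 1 n, p i := by
  rw [← Finset.sum_image (f := p) (fun e he e' he' h => hT e he e' he' h)]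
  refine Finset.sum_le_sum_of_subset_of_nonneg ?_ (fun i _ _ => (hp i).1.le)
  intro d hd
  obtain ⟨e, he, rfl⟩ := Finset.mem_image.1 hd
  exact hf e he

theorem edge_ext {n : ℕ} {e e' : EdgeIdx n} (h1 : e.1.1.val = e'.1.1.val)
    (h2 : e.1.2.val = e'.1.2.val) : e = e' :=
  Subtype.ext (Prod.ext (Fin.ext h1) (Fin.ext h2))

theorem c0_exists {p : ℕ → ℝ} (hp : ∀ i, 0 < p i ∧ p i < 1) (h : ℕ) :
    ∃ c0 : ℝ, 0 < c0 ∧ c0 ≤ 1 ∧ ∀ d < h, c0 ≤ p d ∧ c0 ≤ 1 - p d := by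
  induction h with
  | zero => exact ⟨1, by norm_num, le_refl _, by intro d hd; omega⟩
  | succ h ih =>
    obtain ⟨c, h1, h2, h3⟩ := ih
    have := hp h
    refine ⟨min c (min (p h) (1 - p h)), ?_, ?_, ?_⟩
    · refine lt_min h1 (lt_min this.1 (by linarith))
    · exact (min_le_left _ _).trans h2
    · intro d hd
      rcases Nat.lt_succ_iff_lt_or_eq.1 hd with hd | rfl
      · exact ⟨(min_le_left _ _).trans (h3 d hd).1, (min_le_left _ _).trans (h3 d hd).2⟩
      · exact ⟨(min_le_right _ _).trans (min_le_left _ _),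
          (min_le_right _ _).trans (min_le_right _ _)⟩

section Blocks2
variable {h : ℕ} (hh : 0 < h) (H : Fin h → Fin h → Prop) (i₀ : Fin h)

/-- The probability of the block event. -/
noncomputable def qq (p : ℕ → ℝ) (n j : ℕ) : ℝ := ∏ e ∈ Sj i₀ n j, wt p e (pat hh H n e)

theorem qq_lower {p : ℕ → ℝ} (hp : ∀ i, 0 < p i ∧ p i < 1) :
    ∃ c : ℝ, 0 < c ∧ ∀ n j, c * (∏ i ∈ Finset.Icc 1 n, (1 - p i)) ^ 2 ≤ qq hh H i₀ p n j := by
  obtain ⟨c0, hc0, hc1, hc⟩ := c0_exists hp h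
  refine ⟨c0 ^ (h * h), by positivity, fun n j => ?_⟩
  set P := ∏ i ∈ Finset.Icc 1 n, (1 - p i) with hP
  have hP0 : 0 ≤ P := Finset.prod_nonneg fun i _ => by linarith [(hp i).2]
  let g : EdgeIdx n → ℝ := fun e => wt p e (pat hh H n e)
  have g0 : ∀ e, 0 ≤ g e := fun e => (wt_bounds hp e _).1.le
  have g1 : ∀ e, g e ≤ 1 := fun e => (wt_bounds hp e _).2.le
  let A : Finset (EdgeIdx n) := Finset.univ.filter fun e =>
    e.1.1.val = j * h + i₀ ∧ e.1.2.val / h ≠ j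
  let B : Finset (EdgeIdx n) := Finset.univ.filter fun e =>
    e.1.2.val = j * h + i₀ ∧ e.1.1.val / h ≠ j
  have hb := block_div hh (j := j) i₀.2
  have hS : Sj i₀ n j ⊆ inn h n j ∪ (A ∪ B) := by
    intro e he
    simp only [Sj, inn, A, B, Finset.mem_filter, Finset.mem_univ, true_and,
      Finset.mem_union] at he ⊢
    rcases he with he | he | he
    · exact Or.inl he
    · by_cases h1 : e.1.2.val / h = j
      · exact Or.inl ⟨by rw [he, hb], h1⟩
      · exact Or.inr (Or.inl ⟨he, h1⟩)
    · by_cases h1 : e.1.1.val / h = j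
      · exact Or.inl ⟨h1, by rw [he, hb]⟩
      · exact Or.inr (Or.inr ⟨he, h1⟩)
  have hA : P ≤ ∏ e ∈ A, g e := by
    refine prod_side hp A _ ?_ ?_
    · intro e he
      simp only [A, Finset.mem_filter, Finset.mem_univ, true_and] at he
      simp only [pat, decide_eq_false_iff_not, not_and]
      intro h1
      rw [he.1, hb] at h1
      exact absurd h1.symm he.2
    · intro e he e' he' hl
      simp only [A, Finset.mem_filter, Finset.mem_univ, true_and] at he he'
      have h1 := e.2
      have h2 := e'.2
      rw [Fin.lt_def] at h1 h2
      simp only [elen] at hl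
      exact edge_ext (by omega) (by omega)
  have hB : P ≤ ∏ e ∈ B, g e := by
    refine prod_side hp B _ ?_ ?_
    · intro e he
      simp only [B, Finset.mem_filter, Finset.mem_univ, true_and] at he
      simp only [pat, decide_eq_false_iff_not, not_and]
      intro h1
      rw [he.1, hb] at h1
      exact absurd h1 he.2
    · intro e he e' he' hl
      simp only [B, Finset.mem_filter, Finset.mem_univ, true_and] at he he'
      have h1 := e.2
      have h2 := e'.2
      rw [Fin.lt_def] at h1 h2
      simp only [elen] at hl
      exact edge_ext (by omega) (by omega)
  have hI : c0 ^ (h * h) ≤ ∏ e ∈ inn h n j, g e := by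
    have hcard : (inn h n j).card ≤ h * h := by
      have := Finset.card_le_card_of_injOn (s := inn h n j)
        (t := Finset.range h ×ˢ Finset.range h)
        (fun e => (e.1.1.val % h, e.1.2.val % h)) ?_ ?_
      · simpa using this
      · intro e _
        simp [Nat.mod_lt _ hh]
      · intro e he e' he' hl
        simp only [inn, Finset.coe_filter, Finset.mem_univ, true_and, Set.mem_ofPred_eq] at he he'
        simp only [Prod.mk.injEq] at hl
        refine edge_ext ?_ ?_
        · rw [← Nat.div_add_mod e.1.1.val h, ← Nat.div_add_mod e'.1.1.val h, he.1, he'.1, hl.1]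
        · rw [← Nat.div_add_mod e.1.2.val h, ← Nat.div_add_mod e'.1.2.val h, he.2, he'.2, hl.2]
    calc c0 ^ (h * h) ≤ c0 ^ (inn h n j).card := pow_le_pow_of_le_one hc0.le hc1 hcard
      _ = ∏ e ∈ inn h n j, c0 := by simp
      _ ≤ _ := by
        refine Finset.prod_le_prod (fun _ _ => hc0.le) fun e he => ?_
        simp only [inn, Finset.mem_filter, Finset.mem_univ, true_and] at he
        have hd : elen e < h := by
          have e1 := Nat.div_add_mod e.1.1.val h
          have e2 := Nat.div_add_mod e.1.2.val h
          rw [he.1] at e1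
          rw [he.2] at e2
          have := Nat.mod_lt e.1.2.val hh
          simp only [elen]
          omega
        have := hc _ hd
        simp only [g, wt]
        split_ifs
        · exact this.1
        · exact this.2
  calc c0 ^ (h * h) * P ^ 2 = c0 ^ (h * h) * (P * P) := by ring
    _ ≤ (∏ e ∈ inn h n j, g e) * ((∏ e ∈ A, g e) * ∏ e ∈ B, g e) := by
      have h1 : 0 ≤ ∏ e ∈ inn h n j, g e := Finset.prod_nonneg fun i _ => g0 i
      have h2 : 0 ≤ ∏ e ∈ A, g e := Finset.prod_nonneg fun i _ => g0 i
      gcongr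
    _ ≤ (∏ e ∈ inn h n j, g e) * ∏ e ∈ A ∪ B, g e :=
      mul_le_mul_of_nonneg_left (prod_union_ge A B g g0 g1) (Finset.prod_nonneg fun i _ => g0 i)
    _ ≤ ∏ e ∈ inn h n j ∪ (A ∪ B), g e := prod_union_ge _ _ g g0 g1
    _ ≤ _ := prod_anti hS g g0 g1

/-- The block event. -/
def Ev (n j : ℕ) (ω : Sample n) : Prop := ∀ e ∈ Sj i₀ n j, ω e = pat hh H n e

theorem Pr_Ev (p : ℕ → ℝ) (n j : ℕ) : Pr p n (Ev hh H i₀ n j) = qq hh H i₀ p n j :=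
  Pr_cyl p _ _

theorem Pr_Ev_and (p : ℕ → ℝ) (n j l : ℕ) :
    Pr p n (fun ω => Ev hh H i₀ n j ω ∧ Ev hh H i₀ n l ω) =
      ∏ e ∈ Sj i₀ n j ∪ Sj i₀ n l, wt p e (pat hh H n e) := by
  rw [← Pr_cyl]
  congr 1
  funext ω
  simp only [Ev, Finset.mem_union, or_imp, forall_and]

theorem cov_lt {p : ℕ → ℝ} (hp : ∀ i, 0 < p i ∧ p i < 1) {n j l : ℕ} (hjl : j < l) :
    (∏ e ∈ Sj i₀ n j ∪ Sj i₀ n l, wt p e (pat hh H n e)) - qq hh H i₀ p n j * qq hh H i₀ p n l ≤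
      (∏ e ∈ Sj i₀ n j ∪ Sj i₀ n l, wt p e (pat hh H n e)) * p (h * (l - j)) := by
  let g : EdgeIdx n → ℝ := fun e => wt p e (pat hh H n e)
  have g0 : ∀ e, 0 ≤ g e := fun e => (wt_bounds hp e _).1.le
  have e0 : qq hh H i₀ p n j * qq hh H i₀ p n l =
    (∏ e ∈ Sj i₀ n j ∪ Sj i₀ n l, g e) * ∏ e ∈ Sj i₀ n j ∩ Sj i₀ n l, g e :=
    (Finset.prod_union_inter).symm
  have key : 1 - p (h * (l - j)) ≤ ∏ e ∈ Sj i₀ n j ∩ Sj i₀ n l, g e := by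
    have hbj := block_div hh (j := j) i₀.2
    have hbl := block_div hh (j := l) i₀.2
    have hchar : ∀ e ∈ Sj i₀ n j ∩ Sj i₀ n l,
        e.1.1.val = j * h + i₀ ∧ e.1.2.val = l * h + i₀ := by
      intro e he
      simp only [Sj, Finset.mem_inter, Finset.mem_filter, Finset.mem_univ, true_and] at he
      have hlt := e.2
      rw [Fin.lt_def] at hlt
      have hm : j * h < l * h := Nat.mul_lt_mul_of_pos_right hjl hh
      have d1 : ∀ x : ℕ, x = j * h + i₀ → x / h = j := fun x hx => by rw [hx, hbj]
      have d2 : ∀ x : ℕ, x = l * h + i₀ → x / h = l := fun x hx => by rw [hx, hbl]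
      have a1 := d1 e.1.1.val
      have a2 := d1 e.1.2.val
      have a3 := d2 e.1.1.val
      have a4 := d2 e.1.2.val
      generalize e.1.1.val / h = u at *
      generalize e.1.2.val / h = v at *
      generalize j * h = jj at *
      generalize l * h = ll at *
      omega
    rcases Finset.eq_empty_or_nonempty (Sj i₀ n j ∩ Sj i₀ n l) with h1 | ⟨e, he⟩
    · rw [h1, Finset.prod_empty]
      linarith [(hp (h * (l - j))).1]
    · have hs : Sj i₀ n j ∩ Sj i₀ n l = {e} := by
        refine Finset.eq_singleton_iff_unique_mem.2 ⟨he, fun e' he' => ?_⟩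
        have h1 := hchar e he
        have h2 := hchar e' he'
        exact edge_ext (by rw [h1.1, h2.1]) (by rw [h1.2, h2.2])
      rw [hs, Finset.prod_singleton]
      have h1 := hchar e he
      have hpat : pat hh H n e = false := by
        simp only [pat, decide_eq_false_iff_not, not_and]
        intro h2
        rw [h1.1, h1.2, hbj, hbl] at h2
        omega
      have hlen : elen e = h * (l - j) := by
        simp only [elen]
        rw [h1.1, h1.2, Nat.mul_sub, mul_comm h l, mul_comm h j]
        omega
      simp only [g, hpat, wt, hlen]
      simp
  have hU : 0 ≤ ∏ e ∈ Sj i₀ n j ∪ Sj i₀ n l, g e := Finset.prod_nonneg fun i _ => g0 i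
  rw [e0]
  change (∏ e ∈ Sj i₀ n j ∪ Sj i₀ n l, g e) - _ ≤ (∏ e ∈ Sj i₀ n j ∪ Sj i₀ n l, g e) * _
  nlinarith

theorem cov_sum {p : ℕ → ℝ} (hp : ∀ i, 0 < p i ∧ p i < 1) (n j : ℕ) (hj : j < n / h) :
    ∑ l ∈ Finset.range (n / h), (Pr p n (fun ω => Ev hh H i₀ n j ω ∧ Ev hh H i₀ n l ω)
        - Pr p n (Ev hh H i₀ n j) * Pr p n (Ev hh H i₀ n l)) ≤
      (1 + 2 * ∑ i ∈ Finset.Icc 1 n, p i) * Pr p n (Ev hh H i₀ n j) := by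
  let g : EdgeIdx n → ℝ := fun e => wt p e (pat hh H n e)
  have g0 : ∀ e, 0 ≤ g e := fun e => (wt_bounds hp e _).1.le
  have g1 : ∀ e, g e ≤ 1 := fun e => (wt_bounds hp e _).2.le
  have q0 : ∀ j, 0 ≤ qq hh H i₀ p n j := fun j => Finset.prod_nonneg fun i _ => g0 i
  have hterm : ∀ l, Pr p n (fun ω => Ev hh H i₀ n j ω ∧ Ev hh H i₀ n l ω)
        - Pr p n (Ev hh H i₀ n j) * Pr p n (Ev hh H i₀ n l) ≤
      ((if l = j then 1 else 0) + (if j < l then p (h * (l - j)) else 0)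
        + (if l < j then p (h * (j - l)) else 0)) * qq hh H i₀ p n j := by
    intro l
    rw [Pr_Ev_and, Pr_Ev, Pr_Ev]
    have hle : ∏ e ∈ Sj i₀ n j ∪ Sj i₀ n l, wt p e (pat hh H n e) ≤ qq hh H i₀ p n j :=
      prod_anti Finset.subset_union_left g g0 g1
    rcases lt_trichotomy j l with h1 | h1 | h1
    · have := cov_lt hh H i₀ hp (n := n) h1
      have hpp := (hp (h * (l - j))).1
      simp only [h1, h1.ne', h1.not_gt, if_true, if_false, zero_add, add_zero]
      refine this.trans ?_
      rw [mul_comm]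
      exact mul_le_mul_of_nonneg_left hle hpp.le
    · subst h1
      simp only [lt_irrefl, if_true, if_false, add_zero, one_mul]
      have := mul_nonneg (q0 j) (q0 j)
      linarith
    · have := cov_lt hh H i₀ hp (n := n) h1
      have hpp := (hp (h * (j - l))).1
      simp only [h1, h1.ne, h1.not_gt, if_true, if_false, zero_add]
      rw [Finset.union_comm, mul_comm (qq hh H i₀ p n j)]
      refine this.trans ?_
      rw [mul_comm, Finset.union_comm]
      exact mul_le_mul_of_nonneg_left hle hpp.le
  refine (Finset.sum_le_sum fun l _ => hterm l).trans ?_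
  rw [← Finset.sum_mul, Pr_Ev]
  refine mul_le_mul_of_nonneg_right ?_ (q0 j)
  rw [Finset.sum_add_distrib, Finset.sum_add_distrib, Finset.sum_ite_eq' (Finset.range (n / h)) j,
    ← Finset.sum_filter, ← Finset.sum_filter, if_pos (Finset.mem_range.2 hj)]
  have hbd : ∀ l l', l < n / h → l' < l → h * (l - l') ∈ Finset.Icc 1 n := by
    intro l l' hl hl'
    have h1 : h * (l - l') ≤ h * (n / h) := Nat.mul_le_mul_left _ (by omega)
    have h2 := Nat.mul_div_le n h
    have h3 : 0 < h * (l - l') := Nat.mul_pos hh (by omega)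
    rw [Finset.mem_Icc]
    omega
  have s1 : ∑ l ∈ (Finset.range (n / h)).filter (fun l => j < l), p (h * (l - j)) ≤
      ∑ i ∈ Finset.Icc 1 n, p i := by
    refine sum_side hp _ (fun l => h * (l - j)) ?_ ?_
    · intro l hl
      simp only [Finset.mem_filter, Finset.mem_range] at hl
      exact hbd _ _ hl.1 hl.2
    · intro l hl l' hl' he
      simp only [Finset.mem_filter, Finset.mem_range] at hl hl'
      have := Nat.eq_of_mul_eq_mul_left hh he
      omega
  have s2 : ∑ l ∈ (Finset.range (n / h)).filter (fun l => l < j), p (h * (j - l)) ≤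
      ∑ i ∈ Finset.Icc 1 n, p i := by
    refine sum_side hp _ (fun l => h * (j - l)) ?_ ?_
    · intro l hl
      simp only [Finset.mem_filter, Finset.mem_range] at hl
      exact hbd _ _ hj hl.2
    · intro l hl l' hl' he
      simp only [Finset.mem_filter, Finset.mem_range] at hl hl'
      have := Nat.eq_of_mul_eq_mul_left hh he
      omega
  linarith

theorem none_bound {p : ℕ → ℝ} (hp : ∀ i, 0 < p i ∧ p i < 1) :
    ∃ c : ℝ, 0 < c ∧ ∀ n, h ≤ n →
      Pr p n (fun ω => ∀ j ∈ Finset.range (n / h), ¬ Ev hh H i₀ n j ω) *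
        (((n / h : ℕ) : ℝ) * (c * (∏ i ∈ Finset.Icc 1 n, (1 - p i)) ^ 2)) ≤
      1 + 2 * ∑ i ∈ Finset.Icc 1 n, p i := by
  obtain ⟨c, hc, hcq⟩ := qq_lower hh H i₀ hp
  refine ⟨c, hc, fun n hn => ?_⟩
  have hP : 0 < ∏ i ∈ Finset.Icc 1 n, (1 - p i) :=
    Finset.prod_pos fun i _ => by linarith [(hp i).2]
  have hN : 0 < n / h := Nat.div_pos hn hh
  have hμ : ((n / h : ℕ) : ℝ) * (c * (∏ i ∈ Finset.Icc 1 n, (1 - p i)) ^ 2) ≤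
      ∑ j ∈ Finset.range (n / h), Pr p n (Ev hh H i₀ n j) := by
    have := Finset.card_nsmul_le_sum (Finset.range (n / h)) (fun j => Pr p n (Ev hh H i₀ n j))
      (c * (∏ i ∈ Finset.Icc 1 n, (1 - p i)) ^ 2) (fun j _ => by
        rw [Pr_Ev]; exact hcq n j)
    simpa using this
  have hμ0 : 0 < ((n / h : ℕ) : ℝ) * (c * (∏ i ∈ Finset.Icc 1 n, (1 - p i)) ^ 2) := by
    have : (0 : ℝ) < ((n / h : ℕ) : ℝ) := by exact_mod_cast hN
    positivity
  refine (mul_le_mul_of_nonneg_left hμ (Pr_nonneg hp _)).trans ?_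
  refine second_moment hp _ _ _ (hμ0.trans_le hμ) ?_
  rw [Finset.mul_sum]
  exact Finset.sum_le_sum fun j hj => cov_sum hh H i₀ hp n j (Finset.mem_range.1 hj)

end Blocks2

theorem asym {p : ℕ → ℝ} (hp : ∀ i, 0 < p i ∧ p i < 1)
    (hlim : Tendsto (fun n : ℕ => Real.log (∏ i ∈ Finset.Icc 1 n, (1 - p i)) / Real.log n)
          atTop (nhds 0)) {h : ℕ} (hh : 0 < h) {c : ℝ} (hc : 0 < c) (f : ℕ → ℝ)
    (hf0 : ∀ n, 0 ≤ f n)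
    (hf : ∀ n, h ≤ n → f n * (((n / h : ℕ) : ℝ) * (c * (∏ i ∈ Finset.Icc 1 n, (1 - p i)) ^ 2)) ≤
      1 + 2 * ∑ i ∈ Finset.Icc 1 n, p i) : Tendsto f atTop (nhds 0) := by
  have ht : Tendsto (fun n : ℕ => (6 * h / c) / ((n : ℝ) ^ (1 / 8 : ℝ))) atTop (nhds 0) := by
    refine Tendsto.div_atTop tendsto_const_nhds ?_
    exact (tendsto_rpow_atTop (by norm_num)).comp tendsto_natCast_atTop_atTop
  refine squeeze_zero' (Eventually.of_forall hf0) ?_ ht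
  filter_upwards [hlim.eventually (lt_mem_nhds (show (-(1 / 8) : ℝ) < 0 by norm_num)),
    eventually_ge_atTop (2 * h), eventually_ge_atTop 2] with n h1 h2 h3
  have hn0 : (0 : ℝ) < n := by
    have : 0 < n := by omega
    exact_mod_cast this
  have hlog : 0 < Real.log n := Real.log_pos (by exact_mod_cast h3)
  set P := ∏ i ∈ Finset.Icc 1 n, (1 - p i) with hP
  have hP0 : 0 < P := Finset.prod_pos fun i _ => by linarith [(hp i).2]
  rw [lt_div_iff₀ hlog] at h1
  set t := (n : ℝ) ^ (1 / 8 : ℝ) with htd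
  have ht0 : 0 < t := Real.rpow_pos_of_pos hn0 _
  have ht1 : 1 ≤ t := Real.one_le_rpow (by exact_mod_cast (by omega : 1 ≤ n)) (by norm_num)
  have hlt : Real.log t = 1 / 8 * Real.log n := Real.log_rpow hn0 _
  have ht8 : t ^ 8 = n := by
    rw [htd, ← Real.rpow_natCast, ← Real.rpow_mul hn0.le]
    norm_num
  have hPt : 1 ≤ P * t := by
    have : 0 ≤ Real.log (P * t) := by
      rw [Real.log_mul hP0.ne' ht0.ne', hlt]; linarith
    exact (Real.log_nonneg_iff (by positivity)).1 this
  have hs : ∑ i ∈ Finset.Icc 1 n, p i ≤ t := by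
    have e1 : Real.log P = ∑ i ∈ Finset.Icc 1 n, Real.log (1 - p i) :=
      Real.log_prod (fun i _ => by linarith [(hp i).2])
    have e2 : ∑ i ∈ Finset.Icc 1 n, Real.log (1 - p i) ≤ ∑ i ∈ Finset.Icc 1 n, (- p i) := by
      refine Finset.sum_le_sum fun i _ => ?_
      have := Real.log_le_sub_one_of_pos (x := 1 - p i) (by linarith [(hp i).2])
      linarith
    rw [Finset.sum_neg_distrib] at e2
    have e3 := Real.log_le_sub_one_of_pos ht0
    linarith
  have hd : (n : ℝ) ≤ 2 * h * ((n / h : ℕ) : ℝ) := by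
    have a1 := Nat.div_add_mod n h
    have a2 := Nat.mod_lt n hh
    have : n ≤ 2 * h * (n / h) := by
      have a3 : 1 ≤ n / h := Nat.div_pos (by omega) hh
      have : h * 1 ≤ h * (n / h) := Nat.mul_le_mul_left _ a3
      have : 2 * h * (n / h) = 2 * (h * (n / h)) := by ring
      omega
    exact_mod_cast this
  have hh' : (0 : ℝ) < h := by exact_mod_cast hh
  have hmain := hf n (by omega)
  have hfn := hf0 n
  have b1 : f n * (t ^ 8 * c) ≤ 6 * h * t ^ 3 := by
    have c1 : (1 : ℝ) ≤ (P * t) ^ 2 := one_le_pow₀ hPt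
    calc f n * (t ^ 8 * c) ≤ f n * (t ^ 8 * c) * (P * t) ^ 2 :=
          le_mul_of_one_le_right (by positivity) c1
      _ = f n * ((n : ℝ) * (c * P ^ 2)) * t ^ 2 := by rw [← ht8]; ring
      _ ≤ f n * ((2 * h * ((n / h : ℕ) : ℝ)) * (c * P ^ 2)) * t ^ 2 := by gcongr
      _ = 2 * h * (f n * (((n / h : ℕ) : ℝ) * (c * P ^ 2))) * t ^ 2 := by ring
      _ ≤ 2 * h * (1 + 2 * ∑ i ∈ Finset.Icc 1 n, p i) * t ^ 2 := by gcongr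
      _ ≤ 2 * h * (t + 2 * t) * t ^ 2 := by gcongr
      _ = 6 * h * t ^ 3 := by ring
  rw [div_div, le_div_iff₀ (by positivity)]
  have b2 : f n * (c * t) * t ^ 3 ≤ 6 * h * t ^ 3 := by
    refine le_trans ?_ b1
    have : t ^ 4 ≤ t ^ 8 := pow_le_pow_right₀ ht1 (by norm_num)
    calc f n * (c * t) * t ^ 3 = f n * (t ^ 4 * c) := by ring
      _ ≤ _ := by gcongr
  exact le_of_mul_le_mul_right b2 (by positivity)

theorem aas_fin {p : ℕ → ℝ} (hp : ∀ i, 0 < p i ∧ p i < 1)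
    (hlim : Tendsto (fun n : ℕ => Real.log (∏ i ∈ Finset.Icc 1 n, (1 - p i)) / Real.log n)
          atTop (nhds 0)) {h : ℕ} (H : Fin h → Fin h → Prop)
    (hsymm : ∀ u w, H u w → H w u) (hirr : ∀ u, ¬ H u u) (i₀ : Fin h) :
    Tendsto (fun n => Pr p n (fun ω => Copy H i₀ (sampleAdj ω))) atTop (nhds 1) := by
  have hh : 0 < h := i₀.pos
  obtain ⟨c, hc, hb⟩ := none_bound hh H i₀ hp
  have h0 := asym hp hlim hh hc _ (fun n => Pr_nonneg hp _) hb
  have h1 := h0.const_sub 1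
  rw [sub_zero] at h1
  refine tendsto_of_tendsto_of_tendsto_of_le_of_le h1 tendsto_const_nhds (fun n => ?_)
    (fun n => Pr_le_one hp _)
  simp only
  rw [Pr_compl (fun ω => Copy H i₀ (sampleAdj ω))]
  refine sub_le_sub_left (Pr_mono hp fun ω hω j hj hE => hω ?_) _
  refine cyl_copy hh H i₀ hsymm hirr ?_ ω hE
  have := Nat.mul_div_le n h
  have h2 : h * (j + 1) ≤ h * (n / h) := Nat.mul_le_mul_left _ (Finset.mem_range.1 hj)
  rw [mul_comm]; omega

end Prob2

section Final

/-- Almost sure truth for all admissible sequences. -/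
def AAS (φ : Language.graph.Sentence) : Prop :=
  ∀ p : ℕ → ℝ, (∀ i, 0 < p i ∧ p i < 1) →
    Tendsto (fun n : ℕ => Real.log (∏ i ∈ Finset.Icc 1 n, (1 - p i)) / Real.log n)
      atTop (nhds 0) →
    Tendsto (fun n => ProbL p n φ) atTop (nhds 1)

theorem Copy_of_equiv {W W' V : Type} (e : W' ≃ W) {H : W → W → Prop} {w₀ : W}
    {G : V → V → Prop} (h : Copy (fun a b => H (e a) (e b)) (e.symm w₀) G) : Copy H w₀ G := by
  obtain ⟨f, h1, h2, h3⟩ := h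
  refine ⟨f ∘ e.symm, h1.comp e.symm.injective, fun u w => ?_, fun z hz => ?_⟩
  · simpa using h2 (e.symm u) (e.symm w)
  · obtain ⟨w, hw⟩ := h3 z hz
    exact ⟨e w, by simpa using hw⟩

theorem AAS_of_copy {M : ℕ} {φ : Language.graph.Sentence}
    (h : ∀ n (ω : Sample n), Copy (HAdj (M := M)) .apex (sampleAdj ω) → SatL ω φ) : AAS φ := by
  intro p hp hlim
  obtain ⟨m, ⟨e⟩⟩ := Finite.exists_equiv_fin (HV M)
  have h1 := aas_fin hp hlim (fun a b => HAdj (e.symm a) (e.symm b))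
    (fun u w => HAdj_symm) (fun u => HAdj_irrefl _) (e .apex)
  refine tendsto_of_tendsto_of_tendsto_of_le_of_le h1 tendsto_const_nhds (fun n => ?_)
    (fun n => Pr_le_one hp _)
  exact Pr_mono hp fun ω hω => h n ω (Copy_of_equiv e.symm (by simpa using hω))

/-- A tautology of depth exactly `k`. -/
def taut : (k m : ℕ) → Language.graph.BoundedFormula Empty m
  | 0, _ => .imp .falsum .falsum
  | k + 1, m => .all (taut k (m + 1))

theorem qDepth_taut (k m : ℕ) : qDepth (taut k m) = k := by
  induction k generalizing m with
  | zero => simp [taut, qDepth]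
  | succ k ih => simp [taut, qDepth, ih]

theorem realize_taut {V : Type} [Language.graph.Structure V] (k m : ℕ) (v : Empty → V)
    (xs : Fin m → V) : (taut k m).Realize v xs := by
  induction k generalizing m with
  | zero => exact fun h => h
  | succ k ih => exact fun a => ih _ _

/-- Padding. -/
def pad (k : ℕ) (φ : Language.graph.Sentence) : Language.graph.Sentence :=
  Language.BoundedFormula.imp (taut k 0) φ

theorem qDepth_pad {k : ℕ} {φ : Language.graph.Sentence} (h : qDepth φ ≤ k) :
    qDepth (pad k φ) = k := by
  have := qDepth_taut k 0
  simp only [pad, qDepth, this]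
  omega

theorem SatL_pad {k : ℕ} {φ : Language.graph.Sentence} {n : ℕ} (ω : Sample n) :
    SatL ω (pad k φ) ↔ SatL ω φ := by
  let _ := graphStructure ω
  exact ⟨fun h => h (realize_taut k 0 _ _), fun h _ => h⟩

theorem ProbL_pad {p : ℕ → ℝ} {k : ℕ} {φ : Language.graph.Sentence} {n : ℕ} :
    ProbL p n (pad k φ) = ProbL p n φ := by
  unfold ProbL
  congr 1
  funext ω
  exact propext (SatL_pad ω)

theorem AAS_taut : AAS (taut 0 0) := by
  intro p hp hlim
  have : ∀ n, ProbL p n (taut 0 0) = 1 := by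
    intro n
    have h := Pr_compl (p := p) (n := n) (fun ω => SatL ω (taut 0 0))
    have h2 : Pr p n (fun ω => ¬ SatL ω (taut 0 0)) = 0 := by
      refine Finset.sum_eq_zero fun ω _ => if_neg ?_
      let _ := graphStructure ω
      exact fun h => h (realize_taut 0 0 _ _)
    unfold ProbL
    rw [h, h2, sub_zero]
  simp only [this]
  exact tendsto_const_nhds

/-- The sentence beats the output of the code of index `(k / 2).unpair.1` on `k / 2`. -/
def Beats (k : ℕ) (φ : Language.graph.Sentence) : Prop :=
  ∀ y ∈ Code.eval (Code.ofNatCode (k / 2).unpair.1) (k / 2),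
    ∀ n (ω : Sample n), SatL ω φ → y < n

theorem exists_psi (k : ℕ) : ∃ φ : Language.graph.Sentence, qDepth φ = k ∧ AAS φ ∧
    ((∃ φ, qDepth φ ≤ k ∧ AAS φ ∧ Beats k φ) → Beats k φ) := by
  by_cases h : ∃ φ, qDepth φ ≤ k ∧ AAS φ ∧ Beats k φ
  · obtain ⟨φ, h1, h2, h3⟩ := h
    refine ⟨pad k φ, qDepth_pad h1, fun p hp hl => ?_, fun _ y hy n ω hs => ?_⟩
    · simp only [ProbL_pad]; exact h2 p hp hl
    · exact h3 y hy n ω ((SatL_pad ω).1 hs)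
  · refine ⟨pad k (taut 0 0), qDepth_pad (by rw [qDepth_taut]; omega), fun p hp hl => ?_,
      fun h' => absurd h' h⟩
    simp only [ProbL_pad]; exact AAS_taut p hp hl

end Final


/-- There is a sequence `ψ_k` of sentences of the language `L`, with `ψ_k`
of quantifier depth `k`, such that for every `p̄` with `0 < p i < 1` satisfying
`log (∏_{i=1}^n (1 - p i)) / log n → 0`:  `Prob(n, p̄; ψ_k) → 1` for every `k`, but
`m k = min {i : Prob(i, p̄; ψ_k) > 0}` grows faster than every computable function. -/
theorem statement_16 :
    ∃ ψ : ℕ → Language.graph.Sentence,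
      (∀ k, 1 ≤ k → qDepth (ψ k) = k) ∧
      ∀ p : ℕ → ℝ, (∀ i, 0 < p i ∧ p i < 1) →
        Tendsto
          (fun n : ℕ => Real.log (∏ i ∈ Finset.Icc 1 n, (1 - p i)) / Real.log n)
          atTop (nhds 0) →
        (∀ k, 1 ≤ k → Tendsto (fun n => ProbL p n (ψ k)) atTop (nhds 1)) ∧
        ¬ ∃ g : ℕ → ℕ, Computable g ∧
            ∀ k, 1 ≤ k → sInf {i : ℕ | 0 < ProbL p i (ψ k)} ≤ g k := by
  choose ψ hq ha hb using exists_psi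
  refine ⟨ψ, fun k _ => hq k, fun p hp hlim => ⟨fun k _ => ha k p hp hlim, ?_⟩⟩
  rintro ⟨g, hg, hle⟩
  have hg2 : Computable (fun n : ℕ => g (2 * n)) :=
    hg.comp ((Primrec.nat_mul.comp (Primrec.const 2) Primrec.id).to_comp)
  obtain ⟨c, hc⟩ := Code.exists_code.1 (Partrec.nat_iff.1 hg2.partrec)
  obtain ⟨D, hD⟩ := main_sentence c
  let j := Nat.pair (Code.encodeCode c) (D + 1)
  have hj : D + 1 ≤ j := Nat.right_le_pair _ _
  have hy : g (2 * j) ∈ Code.eval c j := by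
    rw [hc]; simp
  have hk2 : 2 * j / 2 = j := by omega
  have hcode : Code.ofNatCode (2 * j / 2).unpair.1 = c := by
    rw [hk2]
    simp only [j, Nat.unpair_pair]
    exact Denumerable.ofNat_encode c
  obtain ⟨φ, h1, h2, M, h3⟩ := hD j _ hy
  have hbeat := hb (2 * j) ⟨φ, by omega, AAS_of_copy h3, by
    intro y hy' n ω hs
    rw [hcode, hk2] at hy'
    rw [Part.mem_unique hy' hy]
    exact h2 n ω hs⟩
  have hlarge : ∀ i, 0 < ProbL p i (ψ (2 * j)) → g (2 * j) < i := by
    intro i hi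
    by_contra hcon
    refine hi.ne' (Finset.sum_eq_zero fun ω _ => if_neg fun hs => hcon ?_)
    refine hbeat _ ?_ i ω hs
    rw [hcode, hk2]
    exact hy
  have hne : {i : ℕ | 0 < ProbL p i (ψ (2 * j))}.Nonempty :=
    ((ha (2 * j) p hp hlim).eventually (lt_mem_nhds zero_lt_one)).exists
  have h4 := hlarge _ (Nat.sInf_mem hne)
  exact absurd (hle (2 * j) (by omega)) (not_le.2 h4)

end RandomGraph
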